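/- For generic limit-periodic V : ℤ → ℝ (i.e., for every V in some dense Gδ subset of LP(ℤ,ℝ)), the spectrum of the discrete Schrödinger operator H_{λV^{[k]}} is a Cantor set of zero Hausdorff dimension for every λ ≠ 0 and every k ∈ ℕ. -/

import Mathlib

/-!
*No isolated points.* If `E` were isolated in the spectrum, `H_W - E` would be bounded below on the
orthogonal complement of its kernel, which has dimension at most two because an eigenvector is
determined by two consecutive values. But translating a finitely supported approximate eigenvector
by almost-periods of `W` gives three orthonormal approximate eigenvectors, and some combination of
them is orthogonal to the kernel.

*Thin spectrum.* Let `V` be periodic. Off finitely many exceptional energies, some periodic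
perturbation of `V` makes the trace of the sieved monodromy matrix exceed two in absolute value: if
all nearby monodromies were elliptic, a commutator of two of them would be a nearby hyperbolic one.
By compactness finitely many perturbations serve all energies and couplings under consideration.
Concatenate long periodic stretches of each of them into one periodic potential. At every energy
some stretch forces bounded solutions to be exponentially small at its centre, so the energies in
the spectrum are exponentially close to eigenvalues of a box operator over one period, whose length
is only linear in that of the stretches. This gives covers of arbitrarily small `d`-size for every
`d > 0`, uniformly in the coupling; they persist under small perturbations, so Baire's theorem
yields Hausdorff dimension zero, and in particular empty interior.
-/

open Set MeasureTheory BoundedContinuousFunction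

noncomputable section

/-- ℓ²(ℤ; ℝ). -/
abbrev Ell2 : Type := lp (fun _ : ℤ => ℝ) 2

/-- Spectrum of the discrete Schrödinger operator `H_W = Δ + W` on `ℓ²(ℤ)`:
`E` lies in the spectrum iff `H_W - E` is not a linear bijection of `ℓ²(ℤ)`
(for bounded `W`, by the open mapping theorem this is equivalent to `H_W - E`
not being boundedly invertible). -/
def SchrodingerSpectrum (W : ℤ → ℝ) : Set ℝ :=
  {E : ℝ | ¬ ∃ T : Ell2 ≃ₗ[ℝ] Ell2,
      ∀ f : Ell2, ∀ n : ℤ,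
        (T f) n = f (n - 1) + f (n + 1) + (W n - E) * f n}

/-- A Cantor set of zero Hausdorff dimension: nonempty, compact, without isolated
points, with empty interior, and of Hausdorff dimension zero. -/
def IsZeroDimCantor (s : Set ℝ) : Prop :=
  s.Nonempty ∧ IsCompact s ∧ Preperfect s ∧ interior s = ∅ ∧ dimH s = 0

/-- Periodic bounded sequences. -/
def IsPeriodicSeq {α : Type*} [PseudoMetricSpace α] (W : ℤ →ᵇ α) : Prop :=
  ∃ q : ℕ, 0 < q ∧ ∀ n : ℤ, W (n + q) = W n

/-- The limit-periodic functions `ℤ → ℝ`: uniform limits of periodic functions. -/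
def LPZ : Set (ℤ →ᵇ ℝ) := closure {W : ℤ →ᵇ ℝ | IsPeriodicSeq W}

/-- The `k`-fold sieve of `V`: insert `k-1` zeros between consecutive entries. -/
def sieve (V : ℤ → ℝ) (k : ℕ) : ℤ → ℝ :=
  fun n => if (k : ℤ) ∣ n then V (n / k) else 0

section SelfAdjoint

open ContinuousLinearMap
open scoped InnerProductSpace

variable {H : Type*} [NormedAddCommGroup H] [InnerProductSpace ℝ H] [CompleteSpace H]
  {A : H →L[ℝ] H}

theorem isSelfAdjoint_sub_algebraMap (hA : IsSelfAdjoint A) (E : ℝ) :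
    IsSelfAdjoint (A - algebraMap ℝ (H →L[ℝ] H) E) :=
  hA.sub (IsSelfAdjoint.algebraMap _ (IsSelfAdjoint.all E))

omit [CompleteSpace H] in
theorem notMem_spectrum_iff_isUnit_sub {E : ℝ} :
    E ∉ spectrum ℝ A ↔ IsUnit (A - algebraMap ℝ (H →L[ℝ] H) E) := by
  rw [spectrum.notMem_iff, ← IsUnit.neg_iff, neg_sub]

theorem exists_norm_sub_smul_le_of_mem_spectrum (hA : IsSelfAdjoint A) {E : ℝ}
    (hE : E ∈ spectrum ℝ A) {δ : ℝ} (hδ : 0 < δ) : ∃ f : H, f ≠ 0 ∧ ‖A f - E • f‖ ≤ δ * ‖f‖ := by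
  set B := A - algebraMap ℝ (H →L[ℝ] H) E
  have hBadj : IsSelfAdjoint B := isSelfAdjoint_sub_algebraMap hA E
  by_contra! hbelow
  have hbound : ∀ f, ‖f‖ ≤ δ⁻¹.toNNReal * ‖B f‖ := fun f => by
    rcases eq_or_ne f 0 with rfl | hf
    · simp
    · rw [Real.coe_toNNReal _ (inv_nonneg.2 hδ.le), inv_mul_eq_div, le_div_iff₀ hδ, mul_comm]
      exact (hbelow f hf).le
  revert hE
  rw [imp_false, notMem_spectrum_iff_isUnit_sub, ContinuousLinearMap.isUnit_iff_bijective,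
    bijective_iff_dense_range_and_antilipschitz, Submodule.topologicalClosure_eq_top_iff,
    hBadj.isStarNormal.orthogonal_range]
  exact ⟨LinearMap.ker_eq_bot.2 (antilipschitz_of_bound B hbound).injective,
    _, antilipschitz_of_bound B hbound⟩

/- The resolvent at `E` is self-adjoint, so its norm is its spectral radius. -/
theorem exists_mem_spectrum_abs_sub_mul_norm_le (hA : IsSelfAdjoint A) (E : ℝ) {f : H}
    (hf : f ≠ 0) : ∃ t ∈ spectrum ℝ A, |t - E| * ‖f‖ ≤ ‖A f - E • f‖ := by
  by_cases hE : E ∈ spectrum ℝ A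
  · exact ⟨E, hE, by simp⟩
  obtain ⟨u, hu⟩ := notMem_spectrum_iff_isUnit_sub.1 hE
  set R : H →L[ℝ] H := ↑u⁻¹
  have hRadj : IsSelfAdjoint R := by
    have : IsSelfAdjoint u := Units.ext (by
      rw [Units.coe_star, hu]; exact isSelfAdjoint_sub_algebraMap hA E)
    exact congrArg Units.val (this.inv)
  have hR : ∀ g, R (A g - E • g) = g := fun g => by
    have : (R * u) g = g := by rw [Units.inv_mul]; rfl
    rwa [hu] at this
  have : Nontrivial H := ⟨f, 0, hf⟩
  have hrad := spectralRadius_eq_nnnorm R hRadj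
  have hRpos : 0 < ‖R‖ := norm_pos_iff.2 fun h => hf (by rw [← hR f, h]; rfl)
  have hne : (spectrum ℝ R).Nonempty := by
    by_contra! h
    rw [spectralRadius, h] at hrad
    simp only [mem_empty_iff_false, iSup_false, bot_eq_zero'] at hrad
    exact hRpos.ne' (by simpa using hrad.symm)
  obtain ⟨s, hs, hsR⟩ := spectrum.exists_nnnorm_eq_spectralRadius_of_nonempty hne
  have hsR : |s| = ‖R‖ := by rw [hrad] at hsR; exact congrArg NNReal.toReal (by exact_mod_cast hsR)
  refine ⟨E + s⁻¹, ?_, ?_⟩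
  · have hmem := spectrum.inv₀_mem_iff.2 hs
    rwa [hu, sub_eq_neg_add, ← spectrum.add_mem_iff, add_comm] at hmem
  · rw [add_sub_cancel_left, abs_inv, hsR, inv_mul_le_iff₀ hRpos]
    calc ‖f‖ = ‖R (A f - E • f)‖ := by rw [hR]
      _ ≤ ‖R‖ * ‖A f - E • f‖ := R.le_opNorm _

theorem spectrum_nonempty_of_isSelfAdjoint [Nontrivial H] (hA : IsSelfAdjoint A) :
    (spectrum ℝ A).Nonempty := by
  obtain ⟨f, hf⟩ := exists_ne (0 : H)
  obtain ⟨t, ht, -⟩ := exists_mem_spectrum_abs_sub_mul_norm_le hA 0 hf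
  exact ⟨t, ht⟩

theorem exists_mem_spectrum_abs_sub_le_norm_sub {A' : H →L[ℝ] H} (hA : IsSelfAdjoint A)
    (hA' : IsSelfAdjoint A') {E : ℝ} (hE : E ∈ spectrum ℝ A') :
    ∃ t ∈ spectrum ℝ A, |t - E| ≤ ‖A - A'‖ := by
  obtain ⟨f, hf, -⟩ := exists_norm_sub_smul_le_of_mem_spectrum hA' hE one_pos
  have : Nontrivial H := ⟨f, 0, hf⟩
  obtain ⟨t, ht, heq⟩ :=
    (spectrum.isCompact A).exists_infDist_eq_dist (spectrum_nonempty_of_isSelfAdjoint hA) E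
  refine ⟨t, ht, le_of_forall_pos_le_add fun δ hδ => ?_⟩
  obtain ⟨f, hf, hfδ⟩ := exists_norm_sub_smul_le_of_mem_spectrum hA' hE hδ
  obtain ⟨s, hs, hle⟩ := exists_mem_spectrum_abs_sub_mul_norm_le hA E hf
  have hts : |t - E| ≤ |s - E| := by
    rw [abs_sub_comm, ← Real.dist_eq, ← heq, abs_sub_comm, ← Real.dist_eq]
    exact Metric.infDist_le_dist_of_mem hs
  refine hts.trans (le_of_mul_le_mul_right (hle.trans ?_) (norm_pos_iff.2 hf))
  calc ‖A f - E • f‖ = ‖(A - A') f + (A' f - E • f)‖ := by simp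
    _ ≤ ‖A - A'‖ * ‖f‖ + δ * ‖f‖ := (norm_add_le _ _).trans (add_le_add (le_opNorm _ _) hfδ)
    _ = (‖A - A'‖ + δ) * ‖f‖ := by ring

section Gap

variable {r : ℝ} (hr : 0 < r) (hgap : ∀ t ∈ spectrum ℝ A, t = 0 ∨ r ≤ |t|)
include hr hgap

theorem mul_abs_inner_le_norm_sq_of_gap (hA : IsSelfAdjoint A) (f : H) :
    r * |⟪A f, f⟫_ℝ| ≤ ‖A f‖ ^ 2 := by
  rcases eq_or_ne f 0 with rfl | hf
  · simp
  have hquad : ∀ s, |s| = r / 2 → 2 * s * ⟪A f, f⟫_ℝ ≤ ‖A f‖ ^ 2 := fun s hs => by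
    have hlow : |s| * ‖f‖ ≤ ‖A f - s • f‖ := by
      obtain ⟨t, ht, hle⟩ := exists_mem_spectrum_abs_sub_mul_norm_le hA s hf
      refine le_trans (mul_le_mul_of_nonneg_right ?_ (norm_nonneg f)) hle
      rcases hgap t ht with rfl | ht
      · simp
      · linarith [abs_sub_abs_le_abs_sub t s]
    have hsq := pow_le_pow_left₀ (by positivity) hlow 2
    rw [norm_sub_sq_real, norm_smul, Real.norm_eq_abs, mul_pow, real_inner_smul_right] at hsq
    linarith
  rcases abs_cases ⟪A f, f⟫_ℝ with ⟨h, -⟩ | ⟨h, -⟩ <;> rw [h]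
  · linarith [hquad (r / 2) (abs_of_pos (by linarith))]
  · linarith [hquad (-(r / 2)) (by rw [abs_neg, abs_of_pos (by linarith)])]

/- With `T = A² - rA ≥ 0` and `T' = A² + rA ≥ 0` one has `2A⁶ - 2r²A⁴ = (T + T')TT' = TT'T + T'TT'`,
which is positive. -/
theorem mul_norm_apply_apply_le_of_gap (hA : IsSelfAdjoint A) (f : H) :
    r * ‖A (A f)‖ ≤ ‖A (A (A f))‖ := by
  have hsymm : ∀ x y, ⟪A x, y⟫_ℝ = ⟪x, A y⟫_ℝ := hA.isSymmetric
  set p := A (A f)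
  set q := r • A f
  have hTT'T : 0 ≤ ‖A (p - q)‖ ^ 2 + r * ⟪A (p - q), p - q⟫_ℝ := by
    nlinarith [mul_abs_inner_le_norm_sq_of_gap hr hgap hA (p - q),
      neg_abs_le ⟪A (p - q), p - q⟫_ℝ]
  have hT'TT' : 0 ≤ ‖A (p + q)‖ ^ 2 - r * ⟪A (p + q), p + q⟫_ℝ := by
    nlinarith [mul_abs_inner_le_norm_sq_of_gap hr hgap hA (p + q), le_abs_self ⟪A (p + q), p + q⟫_ℝ]
  have hsum : ‖A (p - q)‖ ^ 2 + ‖A (p + q)‖ ^ 2 = 2 * ‖A p‖ ^ 2 + 2 * r ^ 2 * ‖p‖ ^ 2 := by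
    have hAq : A q = r • p := map_smul A r (A f)
    have := parallelogram_law_with_norm ℝ (A p) (A q)
    rw [← map_add, ← map_sub, hAq, norm_smul, Real.norm_eq_abs, abs_of_pos hr] at this
    linear_combination this
  have hdiff : ⟪A (p - q), p - q⟫_ℝ - ⟪A (p + q), p + q⟫_ℝ = -4 * r * ‖p‖ ^ 2 := by
    have hpq : ⟪A p, q⟫_ℝ = r * ‖p‖ ^ 2 := by
      rw [real_inner_smul_right, hsymm, real_inner_self_eq_norm_sq]
    simp only [map_add, map_sub, inner_add_left, inner_sub_left, inner_add_right, inner_sub_right]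
    rw [hsymm q p, real_inner_comm (A p) q, hpq]
    ring
  have hsq : (r * ‖p‖) ^ 2 ≤ ‖A p‖ ^ 2 := by
    linear_combination (hTT'T + hT'TT' + hsum + r * hdiff) / 2
  exact le_of_sq_le_sq hsq (norm_nonneg _)

theorem mul_norm_le_of_mem_orthogonal_ker_of_gap (hA : IsSelfAdjoint A) {h : H}
    (hh : h ∈ A.kerᗮ) : r * ‖h‖ ≤ ‖A h‖ := by
  have hmem : h ∈ (A ∘L A).range.topologicalClosure := by
    have hadj : adjoint (A ∘L A) = A ∘L A := by rw [adjoint_comp, hA.adjoint_eq]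
    have hker : (A ∘L A).ker = A.ker := by
      simpa only [hA.adjoint_eq] using A.ker_adjoint_comp_self
    rw [← hadj, ← orthogonal_ker, hker]
    exact hh
  have hclosed : IsClosed {h : H | r * ‖h‖ ≤ ‖A h‖} := isClosed_le (by fun_prop) (by fun_prop)
  refine closure_minimal ?_ hclosed hmem
  rintro _ ⟨f, rfl⟩
  exact mul_norm_apply_apply_le_of_gap hr hgap hA f

end Gap

omit [CompleteSpace H] in
theorem exists_sum_smul_mem_orthogonal {ι : Type*} [Fintype ι] (K : Submodule ℝ H)
    [FiniteDimensional ℝ K] (hK : Module.finrank ℝ K < Fintype.card ι) (g : ι → H) :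
    ∃ c : ι → ℝ, c ≠ 0 ∧ ∑ i, c i • g i ∈ Kᗮ := by
  let φ : (ι → ℝ) →ₗ[ℝ] K := K.orthogonalProjectionOnto.toLinearMap ∘ₗ Fintype.linearCombination ℝ g
  have hφ : LinearMap.ker φ ≠ ⊥ := LinearMap.ker_ne_bot_of_finrank_lt (by simpa using hK)
  obtain ⟨c, hc, hc0⟩ := Submodule.exists_mem_ne_zero_of_ne_bot hφ
  refine ⟨c, hc0, Submodule.orthogonalProjectionOnto_eq_zero_iff.1 ?_⟩
  simpa [φ, Fintype.linearCombination_apply] using hc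

theorem sq_le_card_mul_sq_of_orthonormal_of_gap {ι : Type*} [Fintype ι] (hA : IsSelfAdjoint A)
    {r : ℝ} (hr : 0 < r) (hgap : ∀ t ∈ spectrum ℝ A, t = 0 ∨ r ≤ |t|)
    [FiniteDimensional ℝ A.ker] (hker : Module.finrank ℝ A.ker < Fintype.card ι) {g : ι → H}
    (hg : Orthonormal ℝ g) {δ : ℝ} (hδ : ∀ i, ‖A (g i)‖ ≤ δ) :
    r ^ 2 ≤ Fintype.card ι * δ ^ 2 := by
  obtain ⟨c, hc0, hc⟩ := exists_sum_smul_mem_orthogonal A.ker hker g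
  have hnorm : ‖∑ i, c i • g i‖ ^ 2 = ∑ i, c i ^ 2 := by
    rw [← real_inner_self_eq_norm_sq, hg.inner_sum]
    simp [sq]
  have hpos : 0 < ∑ i, c i ^ 2 := by
    obtain ⟨i, hi⟩ := Function.ne_iff.1 hc0
    exact Finset.sum_pos' (fun i _ => sq_nonneg _) ⟨i, Finset.mem_univ i, sq_pos_of_ne_zero hi⟩
  have hA_le : ‖A (∑ i, c i • g i)‖ ≤ ∑ i, |c i| * δ := by
    rw [map_sum]
    refine norm_sum_le_of_le _ fun i _ => ?_
    rw [map_smul, norm_smul, Real.norm_eq_abs]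
    exact mul_le_mul_of_nonneg_left (hδ i) (abs_nonneg _)
  have hlow := mul_norm_le_of_mem_orthogonal_ker_of_gap hr hgap hA hc
  refine le_of_mul_le_mul_right ?_ hpos
  calc r ^ 2 * ∑ i, c i ^ 2 = (r * ‖∑ i, c i • g i‖) ^ 2 := by rw [mul_pow, hnorm]
    _ ≤ (∑ i, |c i| * δ) ^ 2 := pow_le_pow_left₀ (by positivity) (hlow.trans hA_le) 2
    _ ≤ (∑ i, |c i| ^ 2) * ∑ _i : ι, δ ^ 2 := Finset.sum_mul_sq_le_sq_mul_sq _ _ _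
    _ = Fintype.card ι * δ ^ 2 * ∑ i, c i ^ 2 := by
      simp only [sq_abs, Finset.sum_const, Finset.card_univ, nsmul_eq_mul]; ring

end SelfAdjoint

section Operator

open scoped InnerProductSpace

theorem ell2_norm_sq (f : Ell2) : ‖f‖ ^ 2 = ∑' n, f n ^ 2 := by
  rw [← real_inner_self_eq_norm_sq, lp.inner_eq_tsum]
  simp [sq]

theorem ell2_summable_sq (f : Ell2) : Summable fun n => f n ^ 2 := by
  simpa [sq] using lp.summable_inner (𝕜 := ℝ) f f

theorem nontrivial_ell2 : Nontrivial Ell2 :=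
  ⟨lp.single 2 0 1, 0, fun h => by simpa using congrArg (fun f : Ell2 => f 0) h⟩

theorem ell2_sum_single_apply (s : Finset ℤ) (f : ℤ → ℝ) (n : ℤ) :
    (∑ i ∈ s, lp.single 2 i (f i) : Ell2) n = if n ∈ s then f n else 0 := by
  simp only [lp.coeFn_sum, lp.coeFn_single, Finset.sum_apply, Finset.sum_pi_single]

/-- The translation `f ↦ f (· + a)` of `ℓ²(ℤ)`. -/
def ell2Translate (a : ℤ) : Ell2 →ₗᵢ[ℝ] Ell2 where
  toFun f := ⟨fun n => f (n + a), memℓp_gen <| by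
    have : Summable fun n => f (n + a) ^ 2 := (Equiv.addRight a).summable_iff.2 (ell2_summable_sq f)
    simpa using this⟩
  map_add' _ _ := rfl
  map_smul' _ _ := rfl
  norm_map' f := by
    rw [← sq_eq_sq₀ (norm_nonneg _) (norm_nonneg _), ell2_norm_sq, ell2_norm_sq]
    exact (Equiv.addRight a).tsum_eq fun n => f n ^ 2

@[simp] theorem ell2Translate_apply (a : ℤ) (f : Ell2) (n : ℤ) :
    ell2Translate a f n = f (n + a) := rfl

theorem inner_ell2Translate_left (a : ℤ) (f g : Ell2) :
    ⟪ell2Translate a f, g⟫_ℝ = ⟪f, ell2Translate (-a) g⟫_ℝ := by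
  rw [lp.inner_eq_tsum, lp.inner_eq_tsum,
    ← (Equiv.addRight a).tsum_eq fun n => ⟪f n, ell2Translate (-a) g n⟫_ℝ]
  simp

/-- The operator of multiplication by a bounded potential on `ℓ²(ℤ)`. -/
def potentialMul (W : ℤ →ᵇ ℝ) : Ell2 →L[ℝ] Ell2 :=
  lp.mapCLM 2 (fun n => W n • ContinuousLinearMap.id ℝ ℝ) (norm_nonneg W) fun n => by
    rw [norm_smul, ContinuousLinearMap.norm_id, mul_one]
    exact W.norm_coe_le_norm n

/-- The discrete Schrödinger operator `H_W = Δ + W` as a bounded operator on `ℓ²(ℤ)`. -/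
def schrodinger (W : ℤ →ᵇ ℝ) : Ell2 →L[ℝ] Ell2 :=
  (ell2Translate (-1)).toContinuousLinearMap + (ell2Translate 1).toContinuousLinearMap +
    potentialMul W

theorem schrodinger_apply (W : ℤ →ᵇ ℝ) (f : Ell2) (n : ℤ) :
    schrodinger W f n = f (n - 1) + f (n + 1) + W n * f n := rfl

theorem norm_potentialMul_le (W : ℤ →ᵇ ℝ) : ‖potentialMul W‖ ≤ ‖W‖ := lp.norm_mapCLM_le ..

theorem norm_schrodinger_le (W : ℤ →ᵇ ℝ) : ‖schrodinger W‖ ≤ 2 + ‖W‖ := by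
  have htranslate : ∀ a, ‖(ell2Translate a).toContinuousLinearMap‖ ≤ 1 := fun a =>
    (ell2Translate a).norm_toContinuousLinearMap_le
  refine norm_add₃_le.trans ?_
  linarith [htranslate 1, htranslate (-1), norm_potentialMul_le W]

theorem schrodinger_sub (W W' : ℤ →ᵇ ℝ) :
    schrodinger W - schrodinger W' = potentialMul (W - W') := by
  ext f n
  change (f (n - 1) + f (n + 1) + W n * f n) - (f (n - 1) + f (n + 1) + W' n * f n)
    = (W n - W' n) * f n
  ring

theorem norm_schrodinger_sub_le_dist (W W' : ℤ →ᵇ ℝ) :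
    ‖schrodinger W - schrodinger W'‖ ≤ dist W W' := by
  rw [schrodinger_sub, dist_eq_norm]
  exact norm_potentialMul_le _

theorem isSelfAdjoint_schrodinger (W : ℤ →ᵇ ℝ) : IsSelfAdjoint (schrodinger W) := by
  rw [ContinuousLinearMap.isSelfAdjoint_iff_isSymmetric]
  intro f g
  have hmul : ⟪potentialMul W f, g⟫_ℝ = ⟪f, potentialMul W g⟫_ℝ := by
    rw [lp.inner_eq_tsum, lp.inner_eq_tsum]
    refine tsum_congr fun n => ?_
    change g n * (W n * f n) = W n * g n * f n
    ring
  change ⟪ell2Translate (-1) f + ell2Translate 1 f + potentialMul W f, g⟫_ℝ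
    = ⟪f, ell2Translate (-1) g + ell2Translate 1 g + potentialMul W g⟫_ℝ
  simp only [inner_add_left, inner_add_right, hmul, inner_ell2Translate_left, neg_neg]
  ring

theorem SchrodingerSpectrum_eq_spectrum (W : ℤ →ᵇ ℝ) :
    SchrodingerSpectrum W = spectrum ℝ (schrodinger W) := by
  ext E
  rw [← not_iff_not, notMem_spectrum_iff_isUnit_sub, ContinuousLinearMap.isUnit_iff_bijective]
  set B := schrodinger W - algebraMap ℝ (Ell2 →L[ℝ] Ell2) E
  have hB : ∀ f n, B f n = f (n - 1) + f (n + 1) + (W n - E) * f n := fun f n => by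
    change f (n - 1) + f (n + 1) + W n * f n - E * f n = _
    ring
  simp only [SchrodingerSpectrum, mem_ofPred_eq, not_not]
  constructor
  · rintro ⟨T, hT⟩
    have hTB : (⇑T : Ell2 → Ell2) = ⇑B := funext fun f => lp.ext (funext fun n => by rw [hT, hB])
    exact hTB ▸ T.bijective
  · exact fun hbij => ⟨LinearEquiv.ofBijective B.toLinearMap hbij, hB⟩

theorem SchrodingerSpectrum_nonempty (W : ℤ →ᵇ ℝ) : (SchrodingerSpectrum W).Nonempty := by
  have := nontrivial_ell2
  rw [SchrodingerSpectrum_eq_spectrum]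
  exact spectrum_nonempty_of_isSelfAdjoint (isSelfAdjoint_schrodinger W)

theorem isCompact_SchrodingerSpectrum (W : ℤ →ᵇ ℝ) : IsCompact (SchrodingerSpectrum W) := by
  rw [SchrodingerSpectrum_eq_spectrum]
  exact spectrum.isCompact _

theorem abs_le_of_mem_SchrodingerSpectrum {W : ℤ →ᵇ ℝ} {E : ℝ} (hE : E ∈ SchrodingerSpectrum W) :
    |E| ≤ 2 + ‖W‖ := by
  rw [SchrodingerSpectrum_eq_spectrum] at hE
  have := nontrivial_ell2
  exact (spectrum.norm_le_norm_of_mem hE).trans (norm_schrodinger_le W)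

theorem exists_mem_SchrodingerSpectrum_abs_sub_le_dist (W W' : ℤ →ᵇ ℝ) {E : ℝ}
    (hE : E ∈ SchrodingerSpectrum W') : ∃ t ∈ SchrodingerSpectrum W, |t - E| ≤ dist W W' := by
  rw [SchrodingerSpectrum_eq_spectrum] at hE ⊢
  obtain ⟨t, ht, hle⟩ := exists_mem_spectrum_abs_sub_le_norm_sub (isSelfAdjoint_schrodinger W)
    (isSelfAdjoint_schrodinger W') hE
  exact ⟨t, ht, hle.trans (norm_schrodinger_sub_le_dist W W')⟩

end Operator

section Preperfect

/-- The potential `n ↦ W (n + a)`. -/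
def translatePotential (a : ℤ) (W : ℤ →ᵇ ℝ) : ℤ →ᵇ ℝ :=
  W.compContinuous ⟨fun n => n + a, continuous_of_discreteTopology⟩

theorem dist_translatePotential_le (a : ℤ) (W W' : ℤ →ᵇ ℝ) :
    dist (translatePotential a W) (translatePotential a W') ≤ dist W W' :=
  (dist_le dist_nonneg).2 fun n => dist_coe_le_dist (n + a)

theorem exists_almost_period_of_mem_LPZ {W : ℤ →ᵇ ℝ} (hW : W ∈ LPZ) {δ : ℝ} (hδ : 0 < δ) :
    ∃ P : ℕ, 0 < P ∧ ∀ j : ℤ, dist (translatePotential (j * P) W) W ≤ δ := by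
  obtain ⟨V, ⟨P, hP, hV⟩, hd⟩ := Metric.mem_closure_iff.1 hW (δ / 2) (by positivity)
  refine ⟨P, hP, fun j => ?_⟩
  have hper : translatePotential (j * P) V = V := ext fun n =>
    (show Function.Periodic V (P : ℤ) from hV).int_mul j n
  calc dist (translatePotential (j * P) W) W
      ≤ dist (translatePotential (j * P) W) (translatePotential (j * P) V) + dist V W := by
        simpa only [hper] using dist_triangle (translatePotential (j * P) W) V W
    _ ≤ dist W V + dist V W := by gcongr; exact dist_translatePotential_le _ _ _
    _ ≤ δ := by rw [dist_comm V W]; linarith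

theorem norm_schrodinger_ell2Translate_sub_le (W : ℤ →ᵇ ℝ) (a : ℤ) (E : ℝ) (f : Ell2) :
    ‖schrodinger W (ell2Translate a f) - E • ell2Translate a f‖
      ≤ dist (translatePotential (-a) W) W * ‖f‖ + ‖schrodinger W f - E • f‖ := by
  have hcov : schrodinger W (ell2Translate a f) - E • ell2Translate a f
      = ell2Translate a (schrodinger (translatePotential (-a) W) f - E • f) := by
    ext n
    change f (n - 1 + a) + f (n + 1 + a) + W n * f (n + a) - E * f (n + a)
      = f (n + a - 1) + f (n + a + 1) + W (n + a + -a) * f (n + a) - E * f (n + a)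
    rw [add_neg_cancel_right, sub_add_eq_add_sub, add_right_comm n 1 a]
  rw [hcov, LinearIsometry.norm_map]
  calc ‖schrodinger (translatePotential (-a) W) f - E • f‖
      = ‖(schrodinger (translatePotential (-a) W) - schrodinger W) f
          + (schrodinger W f - E • f)‖ := by simp
    _ ≤ _ := (norm_add_le _ _).trans (add_le_add_left ((ContinuousLinearMap.le_opNorm _ _).trans
        (mul_le_mul_of_nonneg_right (norm_schrodinger_sub_le_dist _ _) (norm_nonneg f))) _)

theorem eq_zero_of_recurrence {W f : ℤ → ℝ} (hf : ∀ n, f (n - 1) + f (n + 1) + W n * f n = 0)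
    (h0 : f 0 = 0) (h1 : f 1 = 0) : f = 0 := by
  have hpair : ∀ n : ℤ, f n = 0 ∧ f (n + 1) = 0 := fun n => by
    induction n with
    | zero => exact ⟨h0, h1⟩
    | succ n ih =>
      have := hf (n + 1)
      rw [add_sub_cancel_right, ih.1, ih.2] at this
      exact ⟨ih.2, by linarith⟩
    | pred n ih =>
      have := hf (-n)
      rw [ih.1, ih.2] at this
      exact ⟨by linarith, by rw [sub_add_cancel]; exact ih.1⟩
  exact funext fun n => (hpair n).1

theorem exists_injective_ker_schrodinger_sub (W : ℤ →ᵇ ℝ) (E : ℝ) :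
    ∃ φ : (schrodinger W - algebraMap ℝ (Ell2 →L[ℝ] Ell2) E).ker →ₗ[ℝ] ℝ × ℝ,
      Function.Injective φ := by
  refine ⟨((lp.evalₗ (𝕜 := ℝ) (p := 2) (fun _ : ℤ => ℝ) 0).prod
    (lp.evalₗ (𝕜 := ℝ) (p := 2) (fun _ : ℤ => ℝ) 1)) ∘ₗ Submodule.subtype _,
    (injective_iff_map_eq_zero _).2 fun f hf => ?_⟩
  obtain ⟨h0, h1⟩ := Prod.ext_iff.1 hf
  refine Subtype.ext (lp.ext (eq_zero_of_recurrence (W := fun n => W n - E) (fun n => ?_) h0 h1))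
  have hn : f.1 (n - 1) + f.1 (n + 1) + W n * f.1 n - E * f.1 n = 0 :=
    congrArg (fun g : Ell2 => g n) (LinearMap.mem_ker.1 f.2)
  linear_combination hn

theorem exists_finite_support_norm_schrodinger_sub_lt {W : ℤ →ᵇ ℝ} {E : ℝ}
    (hE : E ∈ SchrodingerSpectrum W) {δ : ℝ} (hδ : 0 < δ) :
    ∃ g : Ell2, ‖g‖ = 1 ∧ (∃ N : ℕ, ∀ n, g n ≠ 0 → |n| ≤ N) ∧
      ‖schrodinger W g - E • g‖ < δ := by
  rw [SchrodingerSpectrum_eq_spectrum] at hE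
  obtain ⟨f, hf, hfδ⟩ :=
    exists_norm_sub_smul_le_of_mem_spectrum (isSelfAdjoint_schrodinger W) hE (half_pos hδ)
  have hopen : IsOpen {g : Ell2 | ‖schrodinger W g - E • g‖ < δ * ‖g‖} :=
    isOpen_lt (by fun_prop) (by fun_prop)
  have hmem : ‖schrodinger W f - E • f‖ < δ * ‖f‖ :=
    hfδ.trans_lt (by have := norm_pos_iff.2 hf; nlinarith)
  obtain ⟨s, hs⟩ := ((lp.hasSum_single (by simp) f).eventually (hopen.mem_nhds hmem)).exists
  set g : Ell2 := ∑ i ∈ s, lp.single 2 i (f i)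
  have hs : ‖schrodinger W g - E • g‖ < δ * ‖g‖ := hs
  have hg : 0 < ‖g‖ := pos_of_mul_pos_right ((norm_nonneg _).trans_lt hs) hδ.le
  refine ⟨‖g‖⁻¹ • g, ?_, ?_, ?_⟩
  · rw [norm_smul, norm_inv, norm_norm, inv_mul_cancel₀ hg.ne']
  · refine ⟨s.sup Int.natAbs, fun n hn => ?_⟩
    have hns : n ∈ s := by
      by_contra hns
      have hgn : g n = 0 := (ell2_sum_single_apply s f n).trans (if_neg hns)
      exact hn (by rw [lp.coeFn_smul, Pi.smul_apply, hgn, smul_zero])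
    rw [Int.abs_eq_natAbs]
    exact_mod_cast Finset.le_sup hns
  · rw [map_smul, smul_comm, ← smul_sub, norm_smul, norm_inv, norm_norm, inv_mul_lt_iff₀ hg,
      mul_comm]
    exact hs

theorem orthonormal_ell2Translate {g : Ell2} (hg : ‖g‖ = 1) {N : ℕ}
    (hN : ∀ n, g n ≠ 0 → |n| ≤ N) {Q : ℤ} (hQ : 2 * N < Q) (m : ℕ) :
    Orthonormal ℝ fun j : Fin m => ell2Translate (j * Q) g := by
  refine ⟨fun j => (LinearIsometry.norm_map _ g).trans hg, fun i j hij => ?_⟩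
  change inner ℝ (ell2Translate (i * Q) g) (ell2Translate (j * Q) g) = 0
  rw [lp.inner_eq_tsum]
  refine (tsum_congr fun n => ?_).trans tsum_zero
  change g (n + j * Q) * g (n + i * Q) = 0
  by_contra! h
  have hi := abs_le.1 (hN _ (right_ne_zero_of_mul h))
  have hj := abs_le.1 (hN _ (left_ne_zero_of_mul h))
  rcases lt_or_gt_of_ne (fun h => hij (Fin.ext h) : (i : ℕ) ≠ j) with h | h
  · nlinarith [show (i : ℤ) + 1 ≤ j by exact_mod_cast h]
  · nlinarith [show (j : ℤ) + 1 ≤ i by exact_mod_cast h]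

theorem exists_orthonormal_approx_eigenvectors {W : ℤ →ᵇ ℝ} (hW : W ∈ LPZ) {E : ℝ}
    (hE : E ∈ SchrodingerSpectrum W) (m : ℕ) {δ : ℝ} (hδ : 0 < δ) :
    ∃ g : Fin m → Ell2, Orthonormal ℝ g ∧ ∀ j, ‖schrodinger W (g j) - E • g j‖ ≤ δ := by
  obtain ⟨g, hg, ⟨N, hN⟩, hgδ⟩ := exists_finite_support_norm_schrodinger_sub_lt hE (half_pos hδ)
  obtain ⟨P, hP, hper⟩ := exists_almost_period_of_mem_LPZ hW (half_pos hδ)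
  refine ⟨_, orthonormal_ell2Translate hg hN (Q := (2 * N + 1) * P) (by nlinarith) m, fun j => ?_⟩
  refine (norm_schrodinger_ell2Translate_sub_le W _ E g).trans ?_
  have := hper (-(j * (2 * N + 1)))
  rw [neg_mul, mul_assoc] at this
  rw [hg]
  linarith

theorem preperfect_SchrodingerSpectrum_of_mem_LPZ {W : ℤ →ᵇ ℝ} (hW : W ∈ LPZ) :
    Preperfect (SchrodingerSpectrum W) := by
  intro E hE
  rw [accPt_iff_nhds]
  by_contra! hiso
  obtain ⟨U, hU, hiso⟩ := hiso
  obtain ⟨r, hr, hball⟩ := Metric.mem_nhds_iff.1 hU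
  let A := schrodinger W - algebraMap ℝ (Ell2 →L[ℝ] Ell2) E
  have hgap : ∀ t ∈ spectrum ℝ A, t = 0 ∨ r ≤ |t| := fun t ht => by
    change t ∈ spectrum ℝ (schrodinger W - algebraMap ℝ (Ell2 →L[ℝ] Ell2) E) at ht
    rw [sub_eq_neg_add, ← spectrum.add_mem_iff, ← SchrodingerSpectrum_eq_spectrum] at ht
    by_contra! hcon
    exact hcon.1 (by simpa using hiso _ ⟨hball (by simpa using hcon.2), ht⟩)
  obtain ⟨φ, hφ⟩ := exists_injective_ker_schrodinger_sub W E
  have : FiniteDimensional ℝ A.ker := Module.Finite.of_injective φ hφ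
  have hker : Module.finrank ℝ A.ker < Fintype.card (Fin 3) := by
    have hle : Module.finrank ℝ A.ker ≤ Module.finrank ℝ (ℝ × ℝ) :=
      LinearMap.finrank_le_finrank_of_injective hφ
    rw [Module.finrank_prod, Module.finrank_self] at hle
    rw [Fintype.card_fin]
    omega
  obtain ⟨g, hg, hgr⟩ := exists_orthonormal_approx_eigenvectors hW hE 3 (half_pos hr)
  have hle := sq_le_card_mul_sq_of_orthonormal_of_gap
    (isSelfAdjoint_sub_algebraMap (isSelfAdjoint_schrodinger W) E) hr hgap hker hg hgr
  simp only [Fintype.card_fin] at hle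
  push_cast at hle
  nlinarith

end Preperfect

section Sieve

/-- The potential `n ↦ lam * sieve V k n` as a bounded function. -/
def scaledSieve (lam : ℝ) (k : ℕ) (V : ℤ →ᵇ ℝ) : ℤ →ᵇ ℝ :=
  ofNormedAddCommGroupDiscrete (fun n => lam * sieve V k n) (|lam| * ‖V‖) fun n => by
    rw [norm_mul, Real.norm_eq_abs]
    refine mul_le_mul_of_nonneg_left ?_ (abs_nonneg lam)
    unfold sieve
    split_ifs
    · exact V.norm_coe_le_norm _
    · simp

theorem scaledSieve_apply (lam : ℝ) (k : ℕ) (V : ℤ →ᵇ ℝ) (n : ℤ) :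
    scaledSieve lam k V n = lam * sieve V k n := rfl

theorem sieve_mul {k : ℕ} (hk : 0 < k) (V : ℤ → ℝ) (n : ℤ) : sieve V k (k * n) = V n := by
  rw [sieve, if_pos (dvd_mul_right _ _), Int.mul_ediv_cancel_left n (by positivity)]

theorem sieve_mul_add {k i : ℕ} (hi : i ≠ 0) (hik : i < k) (V : ℤ → ℝ) (n : ℤ) :
    sieve V k (k * n + i) = 0 := by
  refine if_neg fun h => ?_
  have hki : k ∣ i := by exact_mod_cast (Int.dvd_add_right (dvd_mul_right (k : ℤ) n)).1 h
  exact absurd (Nat.le_of_dvd (Nat.pos_of_ne_zero hi) hki) (by omega)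

theorem sieve_periodic {k q : ℕ} (hk : 0 < k) {V : ℤ → ℝ} (hV : Function.Periodic V q) :
    Function.Periodic (sieve V k) (k * q : ℕ) := fun n => by
  have hdvd : (k : ℤ) ∣ n + (k * q : ℕ) ↔ (k : ℤ) ∣ n := by
    push_cast; exact Int.dvd_add_left (dvd_mul_right _ _)
  have hdiv : (n + (k * q : ℕ)) / (k : ℤ) = n / k + q := by
    push_cast
    exact Int.add_mul_ediv_left _ _ (by positivity)
  simp only [sieve, hdvd, hdiv, hV (n / k)]

theorem dist_scaledSieve_le (lam : ℝ) (k : ℕ) (V V' : ℤ →ᵇ ℝ) :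
    dist (scaledSieve lam k V) (scaledSieve lam k V') ≤ |lam| * dist V V' := by
  refine (dist_le (by positivity)).2 fun n => ?_
  rw [scaledSieve_apply, scaledSieve_apply, Real.dist_eq, ← mul_sub, abs_mul, ← Real.dist_eq]
  refine mul_le_mul_of_nonneg_left ?_ (abs_nonneg lam)
  unfold sieve
  split_ifs
  · exact dist_coe_le_dist _
  · simp

theorem isPeriodicSeq_scaledSieve {V : ℤ →ᵇ ℝ} (hV : IsPeriodicSeq V) {k : ℕ} (hk : 0 < k)
    (lam : ℝ) : IsPeriodicSeq (scaledSieve lam k V) := by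
  obtain ⟨q, hq, hV⟩ := hV
  exact ⟨k * q, by positivity, fun n => congrArg (lam * ·) (sieve_periodic hk hV n)⟩

theorem scaledSieve_mem_LPZ {V : ℤ →ᵇ ℝ} (hV : V ∈ LPZ) {k : ℕ} (hk : 0 < k) (lam : ℝ) :
    scaledSieve lam k V ∈ LPZ := by
  have hlip : LipschitzWith ‖lam‖₊ (scaledSieve lam k) :=
    LipschitzWith.of_dist_le_mul (dist_scaledSieve_le lam k)
  exact map_mem_closure hlip.continuous hV fun _ hW => isPeriodicSeq_scaledSieve hW hk lam

end Sieve

section LocalSolution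

theorem hasSum_sum_range_block {h : ℤ → ℝ} {S : ℝ} (hh : HasSum h S) {P : ℕ} (hP : 0 < P) (b : ℤ) :
    HasSum (fun j : ℤ => ∑ r ∈ Finset.range P, h (b + j * P + r)) S := by
  have : NeZero P := ⟨hP.ne'⟩
  let e : ℤ × Fin P ≃ ℤ := (Int.divModEquiv P).symm.trans (Equiv.addLeft b)
  have he : ∀ p : ℤ × Fin P, h (b + p.1 * P + p.2) = (h ∘ e) p := fun p => by
    simp [e, add_assoc]
  refine ((e.hasSum_iff.2 hh).prod_fiberwise fun j => ?_)
  simp only [← he, Finset.sum_range]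
  exact hasSum_fintype _

theorem le_sum_window {h : ℤ → ℝ} (h0 : ∀ n, 0 ≤ h n) {P : ℕ} (hP : 0 < P) {b j n : ℤ}
    (hlow : b + (j - 2) * P ≤ n) (hhigh : n < b + (j + 3) * P) :
    h n ≤ ∑ s ∈ Finset.Icc (-2 : ℤ) 2, ∑ r ∈ Finset.range P, h (b + (j + s) * P + r) := by
  have hP : (0 : ℤ) < P := by exact_mod_cast hP
  obtain ⟨r, hr⟩ := Int.eq_ofNat_of_zero_le (Int.emod_nonneg (n - b) hP.ne')
  have hrP := Int.emod_lt_of_pos (n - b) hP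
  have hdiv := Int.mul_ediv_add_emod (n - b) P
  rw [hr] at hrP hdiv
  set t := (n - b) / (P : ℤ)
  have hs : t - j ∈ Finset.Icc (-2 : ℤ) 2 := by
    rw [Finset.mem_Icc]
    constructor <;> by_contra! hcon <;> nlinarith
  have hn : b + (j + (t - j)) * P + r = n := by linear_combination hdiv
  calc h n = h (b + (j + (t - j)) * P + r) := by rw [hn]
    _ ≤ ∑ r ∈ Finset.range P, h (b + (j + (t - j)) * P + r) :=
      Finset.single_le_sum (f := fun r : ℕ => h (b + (j + (t - j)) * P + r))
        (fun _ _ => h0 _) (Finset.mem_range.2 (by omega))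
    _ ≤ _ := Finset.single_le_sum
      (f := fun s : ℤ => ∑ r ∈ Finset.range P, h (b + (j + s) * P + r))
      (fun _ _ => Finset.sum_nonneg fun _ _ => h0 _) hs

theorem exists_sum_window_le {u h : ℤ → ℝ} {U S : ℝ} (hu : HasSum u U) (hh : HasSum h S)
    (h0 : ∀ j, 0 ≤ h j) (hU : 0 < U) (hS : S ≤ 2 * U) :
    ∃ j, 0 < u j ∧ ∑ s ∈ Finset.Icc (-2 : ℤ) 2, h (j + s) ≤ 10 * u j := by
  by_contra! hlarge
  have hwindow : HasSum (fun j => ∑ s ∈ Finset.Icc (-2 : ℤ) 2, h (j + s)) (5 * S) := by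
    have : HasSum (fun j => ∑ s ∈ Finset.Icc (-2 : ℤ) 2, h (j + s))
        (∑ _s ∈ Finset.Icc (-2 : ℤ) 2, S) :=
      hasSum_sum fun s _ => (Equiv.addRight s).hasSum_iff.2 hh
    simpa using this
  have hle : ∀ j, 10 * u j ≤ ∑ s ∈ Finset.Icc (-2 : ℤ) 2, h (j + s) := fun j => by
    rcases le_or_gt (u j) 0 with hj | hj
    · linarith [Finset.sum_nonneg fun s (_ : s ∈ Finset.Icc (-2 : ℤ) 2) => h0 (j + s)]
    · exact (hlarge j hj).le
  obtain ⟨j, hj⟩ : ∃ j, 0 < u j := by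
    by_contra! hneg
    exact hU.not_ge (hasSum_le hneg hu hasSum_zero)
  have := hasSum_lt hle (hlarge j hj) (hu.mul_left 10) hwindow
  linarith

/- Pigeonhole: sum `δ⁻² g² + f²` and `f²` over the period blocks and compare. -/
theorem exists_block_sq_le {f g : Ell2} (hf : f ≠ 0) {δ : ℝ} (hδ : 0 < δ) (hg : ‖g‖ ≤ δ * ‖f‖)
    {P : ℕ} (hP : 0 < P) (b : ℤ) :
    ∃ j : ℤ, ∃ u > 0, ∑ r ∈ Finset.range P, f (b + j * P + r) ^ 2 = u ∧
      ∀ n, b + (j - 2) * P ≤ n → n < b + (j + 3) * P →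
        f n ^ 2 ≤ 10 * u ∧ g n ^ 2 ≤ δ ^ 2 * (10 * u) := by
  let h : ℤ → ℝ := fun n => (δ ^ 2)⁻¹ * g n ^ 2 + f n ^ 2
  have hh0 : ∀ n, 0 ≤ h n := fun n => by positivity
  have hsum : ∀ g : Ell2, HasSum (fun n => g n ^ 2) (‖g‖ ^ 2) := fun g =>
    ell2_norm_sq g ▸ (ell2_summable_sq g).hasSum
  have hgf : ‖g‖ ^ 2 ≤ δ ^ 2 * ‖f‖ ^ 2 := by
    rw [← mul_pow]; exact pow_le_pow_left₀ (norm_nonneg _) hg 2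
  obtain ⟨j, hu, hwindow⟩ := exists_sum_window_le (hasSum_sum_range_block (hsum f) hP b)
    (hasSum_sum_range_block (((hsum g).mul_left (δ ^ 2)⁻¹).add (hsum f)) hP b)
    (fun j => Finset.sum_nonneg fun r _ => hh0 _) (by positivity)
    (by linarith [(inv_mul_le_iff₀ (by positivity : 0 < δ ^ 2)).2 hgf])
  refine ⟨j, _, hu, rfl, fun n hlow hhigh => ?_⟩
  have hn := (le_sum_window hh0 hP hlow hhigh).trans hwindow
  have hg0 : 0 ≤ (δ ^ 2)⁻¹ * g n ^ 2 := by positivity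
  exact ⟨by linarith, (inv_mul_le_iff₀ (by positivity)).1 (by linarith [sq_nonneg (f n)])⟩

theorem exists_local_approx_solution {W : ℤ →ᵇ ℝ} {P : ℕ} (hP : 0 < P)
    (hW : Function.Periodic W P) {E : ℝ} (hE : E ∈ SchrodingerSpectrum W) (b : ℤ) {δ : ℝ}
    (hδ : 0 < δ) :
    ∃ f : ℤ → ℝ, (∀ n, |f n| ≤ 4) ∧ ∑ r ∈ Finset.range P, f (b + r) ^ 2 = 1 ∧
      ∀ n, b - P ≤ n → n < b + 2 * P → |f (n - 1) + f (n + 1) + W n * f n - E * f n| ≤ δ * 4 := by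
  rw [SchrodingerSpectrum_eq_spectrum] at hE
  obtain ⟨f, hf, hfδ⟩ :=
    exists_norm_sub_smul_le_of_mem_spectrum (isSelfAdjoint_schrodinger W) hE hδ
  obtain ⟨j, u, hu, hblock, hle⟩ := exists_block_sq_le hf hδ hfδ hP b
  have hsq : ∀ x : ℝ, (x / √u) ^ 2 = x ^ 2 / u := fun x => by rw [div_pow, Real.sq_sqrt hu.le]
  let F : ℤ → ℝ := fun n => if b - 2 * P ≤ n ∧ n < b + 3 * P then f (n + j * P) / √u else 0
  have hF : ∀ n, b - 2 * P ≤ n → n < b + 3 * P → F n = f (n + j * P) / √u := fun n hlow hhigh =>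
    if_pos ⟨hlow, hhigh⟩
  refine ⟨F, fun n => ?_, ?_, fun n hlow hhigh => ?_⟩
  · refine abs_le_of_sq_le_sq ?_ (by norm_num)
    by_cases hn : b - 2 * P ≤ n ∧ n < b + 3 * P
    · rw [hF n hn.1 hn.2, hsq, div_le_iff₀ hu]
      linarith [(hle (n + j * P) (by linarith) (by linarith)).1]
    · rw [show F n = 0 from if_neg hn]
      norm_num
  · have hterm : ∀ r ∈ Finset.range P, F (b + r) ^ 2 = f (b + j * P + r) ^ 2 / u := fun r hr => by
      rw [Finset.mem_range] at hr
      rw [hF _ (by omega) (by omega), hsq, add_right_comm]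
    rw [Finset.sum_congr rfl hterm, ← Finset.sum_div, hblock, div_self hu.ne']
  · have hWj : W (n + j * P) = W n := hW.int_mul j n
    have hres : F (n - 1) + F (n + 1) + W n * F n - E * F n
        = (schrodinger W f - E • f) (n + j * P) / √u := by
      rw [hF _ (by omega) (by omega), hF _ (by omega) (by omega), hF _ (by omega) (by omega)]
      change _ = (f (n + j * P - 1) + f (n + j * P + 1) + W (n + j * P) * f (n + j * P)
        - E * f (n + j * P)) / √u
      rw [hWj, sub_add_eq_add_sub, add_right_comm n 1]
      ring
    rw [hres]
    refine abs_le_of_sq_le_sq ?_ (by positivity)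
    rw [hsq, div_le_iff₀ hu, mul_pow]
    have := (hle (n + j * P) (by linarith) (by linarith)).2
    nlinarith [mul_pos (sq_pos_of_pos hδ) hu]

theorem exists_local_solution {W : ℤ →ᵇ ℝ} {P : ℕ} (hP : 0 < P) (hW : Function.Periodic W P)
    {E : ℝ} (hE : E ∈ SchrodingerSpectrum W) (b : ℤ) :
    ∃ f : ℤ → ℝ, (∀ n, |f n| ≤ 4) ∧ ∑ r ∈ Finset.range P, f (b + r) ^ 2 = 1 ∧
      ∀ n, b - P ≤ n → n < b + 2 * P → f (n - 1) + f (n + 1) + W n * f n = E * f n := by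
  let K : Set (ℤ → ℝ) :=
    (Set.univ.pi fun _ => Icc (-4) 4) ∩ {f | ∑ r ∈ Finset.range P, f (b + r) ^ 2 = 1}
  have hK : IsCompact K := (isCompact_univ_pi fun _ => isCompact_Icc).inter_right
    (isClosed_eq (by fun_prop) continuous_const)
  have hmemK : ∀ f, f ∈ K ↔ (∀ n, |f n| ≤ 4) ∧ ∑ r ∈ Finset.range P, f (b + r) ^ 2 = 1 := by
    intro f
    simp only [K, mem_inter_iff, mem_univ_pi, mem_Icc, abs_le, mem_ofPred_eq]
  let Φ : (ℤ → ℝ) → ℝ := fun f =>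
    ∑ n ∈ Finset.Ico (b - P) (b + 2 * P), |f (n - 1) + f (n + 1) + W n * f n - E * f n|
  have happrox : ∀ δ > 0, ∃ f ∈ K, Φ f ≤ 12 * P * δ := fun δ hδ => by
    obtain ⟨f, hf4, hf1, hfδ⟩ := exists_local_approx_solution hP hW hE b hδ
    refine ⟨f, (hmemK f).2 ⟨hf4, hf1⟩, ?_⟩
    refine (Finset.sum_le_card_nsmul _ _ (δ * 4) fun n hn => ?_).trans_eq ?_
    · exact hfδ n (Finset.mem_Ico.1 hn).1 (Finset.mem_Ico.1 hn).2
    · rw [Int.card_Ico, show b + 2 * P - (b - P) = ((3 * P : ℕ) : ℤ) by push_cast; ring,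
        Int.toNat_natCast, nsmul_eq_mul]
      push_cast
      ring
  obtain ⟨f₁, hf₁, -⟩ := happrox 1 one_pos
  obtain ⟨f, hf, hmin⟩ := hK.exists_isMinOn ⟨f₁, hf₁⟩ (f := Φ) (by fun_prop)
  have hΦ : Φ f = 0 := by
    refine le_antisymm (le_of_forall_pos_le_add fun ε hε => ?_)
      (Finset.sum_nonneg fun _ _ => abs_nonneg _)
    obtain ⟨g, hg, hgε⟩ := happrox (ε / (12 * P)) (by positivity)
    rw [mul_div_cancel₀ _ (by positivity)] at hgε
    have : Φ f ≤ Φ g := hmin hg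
    linarith
  obtain ⟨hf4, hf1⟩ := (hmemK f).1 hf
  refine ⟨f, hf4, hf1, fun n hlow hhigh => ?_⟩
  have := (Finset.sum_eq_zero_iff_of_nonneg fun _ _ => abs_nonneg _).1 hΦ n
    (Finset.mem_Ico.2 ⟨hlow, hhigh⟩)
  exact sub_eq_zero.1 (abs_eq_zero.1 this)

end LocalSolution

section Cocycle

variable {M : Type*} [Monoid M]

/-- The ordered product `g (n + j - 1) * ⋯ * g (n + 1) * g n`. -/
def cocycle (g : ℤ → M) (n : ℤ) : ℕ → M
  | 0 => 1
  | j + 1 => g (n + j) * cocycle g n j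

theorem cocycle_one (g : ℤ → M) (n : ℤ) : cocycle g n 1 = g n := by simp [cocycle]

theorem cocycle_add (g : ℤ → M) (n : ℤ) (i j : ℕ) :
    cocycle g n (i + j) = cocycle g (n + i) j * cocycle g n i := by
  induction j with
  | zero => rw [add_zero, cocycle, one_mul]
  | succ j ih => rw [← add_assoc, cocycle, cocycle, ih, mul_assoc, Nat.cast_add, add_assoc n]

theorem cocycle_congr {g g' : ℤ → M} {n n' : ℤ} {j : ℕ} (h : ∀ i < j, g (n + i) = g' (n' + i)) :
    cocycle g n j = cocycle g' n' j := by
  induction j with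
  | zero => rfl
  | succ j ih =>
    rw [cocycle, cocycle, h j j.lt_succ_self, ih fun i hi => h i (hi.trans j.lt_succ_self)]

theorem cocycle_const (x : M) (n : ℤ) (j : ℕ) : cocycle (fun _ => x) n j = x ^ j := by
  induction j with
  | zero => rw [cocycle, pow_zero]
  | succ j ih => rw [cocycle, ih, pow_succ']

theorem cocycle_mul (g : ℤ → M) (q : ℕ) (n : ℤ) (r : ℕ) :
    cocycle g (q * n) (q * r) = cocycle (fun i => cocycle g (q * i) q) n r := by
  induction r with
  | zero => rfl
  | succ r ih => rw [Nat.mul_succ, cocycle_add, ih, cocycle, Nat.cast_mul, mul_add]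

theorem cocycle_getD {α : Type*} (g : α → M) (d : α) (l : List α) :
    cocycle (fun n => g (l.getD n.toNat d)) 0 l.length = (l.reverse.map g).prod := by
  induction l using List.reverseRecOn with
  | nil => rfl
  | append_singleton l x ih =>
    have hinit : cocycle (fun n => g ((l ++ [x]).getD n.toNat d)) 0 l.length
        = cocycle (fun n => g (l.getD n.toNat d)) 0 l.length := cocycle_congr fun i hi => by
      rw [zero_add, Int.toNat_natCast, List.getD_append _ _ _ _ hi]
    rw [List.length_append, List.length_singleton, cocycle, hinit, ih]
    simp

theorem exists_periodic_cocycle_eq_prod {α : Type*} {l : List α} (hl : l ≠ []) :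
    ∃ a : ℤ → α, Function.Periodic a l.length ∧ (∀ n, a n ∈ l) ∧
      ∀ g : α → M, cocycle (fun n => g (a n)) 0 l.length = (l.map g).prod := by
  have hlen : (0 : ℤ) < l.length := by exact_mod_cast List.length_pos_iff.2 hl
  let d := l.head hl
  refine ⟨fun n => l.reverse.getD (n % l.length).toNat d, fun n => by simp, fun n => ?_,
    fun g => ?_⟩
  · have hlt : (n % l.length).toNat < l.reverse.length := by
      rw [List.length_reverse]
      have := Int.emod_lt_of_pos n hlen
      omega
    change l.reverse.getD (n % l.length).toNat d ∈ l
    rw [List.getD_eq_getElem _ _ hlt]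
    exact List.mem_reverse.1 (List.getElem_mem _)
  · have := cocycle_getD g d l.reverse
    rw [List.length_reverse, List.reverse_reverse] at this
    rw [← this]
    refine cocycle_congr fun i hi => ?_
    change g (l.reverse.getD ((0 + i : ℤ) % l.length).toNat d) = _
    rw [zero_add, Int.emod_eq_of_lt (by positivity : (0 : ℤ) ≤ i) (by exact_mod_cast hi)]

theorem det_cocycle {n : Type*} [Fintype n] [DecidableEq n] {R : Type*} [CommRing R]
    {g : ℤ → Matrix n n R} (hg : ∀ i, (g i).det = 1) (i : ℤ) (j : ℕ) : (cocycle g i j).det = 1 := by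
  induction j with
  | zero => exact Matrix.det_one
  | succ j ih => rw [cocycle, Matrix.det_mul, hg, ih, one_mul]

end Cocycle

section Elliptic

open Matrix

theorem sq_eq_trace_smul_sub_one {R : Type*} [CommRing R] {A : Matrix (Fin 2) (Fin 2) R}
    (hA : A.det = 1) : A * A = A.trace • A - 1 := by
  rw [det_fin_two] at hA
  ext i j
  fin_cases i <;> fin_cases j <;> simp [Matrix.mul_apply, Fin.sum_univ_two, trace_fin_two]
  · linear_combination -hA
  · ring
  · ring
  · linear_combination -hA

theorem exists_algHom_circle_of_elliptic {A : Matrix (Fin 2) (Fin 2) ℝ} (hA : A.det = 1)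
    (htr : |A.trace| < 2) :
    ∃ φ : ℂ →ₐ[ℝ] Matrix (Fin 2) (Fin 2) ℝ, ∃ z : Circle, φ z = A := by
  set c := A.trace / 2 with hc
  have hc1 : 0 < 1 - c ^ 2 := by
    have := (sq_lt_sq' (by linarith [abs_lt.1 htr]) (abs_lt.1 htr).2)
    rw [hc]; linarith
  set s := √(1 - c ^ 2)
  have hs : s ≠ 0 := (Real.sqrt_pos.2 hc1).ne'
  have hs2 : s ^ 2 = 1 - c ^ 2 := Real.sq_sqrt hc1.le
  have hJ : (s⁻¹ • (A - c • 1)) * (s⁻¹ • (A - c • 1)) = -1 := by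
    have hsq : (A - c • 1) * (A - c • 1) = (-s ^ 2) • (1 : Matrix (Fin 2) (Fin 2) ℝ) := by
      rw [sub_mul, mul_sub, mul_sub, sq_eq_trace_smul_sub_one hA, hs2, hc]
      simp only [smul_mul_assoc, mul_smul_comm, one_mul, mul_one]
      module
    rw [smul_mul_smul_comm, hsq, smul_smul, ← mul_inv, ← sq, mul_neg,
      inv_mul_cancel₀ (pow_ne_zero 2 hs), neg_one_smul]
  refine ⟨Complex.lift ⟨_, hJ⟩, ⟨⟨c, s⟩, ?_⟩, ?_⟩
  · refine mem_sphere_zero_iff_norm.2 ((sq_eq_sq₀ (norm_nonneg _) zero_le_one).1 ?_)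
    rw [Complex.sq_norm, Complex.normSq_mk, ← sq, ← sq, hs2]
    ring
  · change algebraMap ℝ _ c + s • _ = A
    rw [smul_smul, mul_inv_cancel₀ hs, one_smul, Algebra.algebraMap_eq_smul_one, add_sub_cancel]

theorem exists_pow_mem_of_elliptic {A : Matrix (Fin 2) (Fin 2) ℝ} (hA : A.det = 1)
    (htr : |A.trace| < 2) {U : Set (Matrix (Fin 2) (Fin 2) ℝ)} (hU : IsOpen U)
    (hAU : A.adjugate ∈ U) : ∃ n : ℕ, A ^ n ∈ U := by
  obtain ⟨φ, z, rfl⟩ := exists_algHom_circle_of_elliptic hA htr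
  have hφ : Continuous fun w : Circle => φ w :=
    (LinearMap.continuous_of_finiteDimensional φ.toLinearMap).comp continuous_subtype_val
  have hinv : φ (z⁻¹ : Circle) = (φ z).adjugate := by
    refine (left_inv_eq_right_inv (a := φ z) (by rw [adjugate_mul, hA, one_smul]) ?_).symm
    rw [← map_mul, ← Circle.coe_mul, mul_inv_cancel, Circle.coe_one, map_one]
  have hcluster := mapClusterPt_self_zpow_atTop_pow z (-1)
  have hnhds : {w : Circle | φ w ∈ U} ∈ nhds (z ^ (-1 : ℤ)) :=
    (hU.preimage hφ).mem_nhds (by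
      rw [_root_.zpow_neg_one, mem_preimage, hinv]; exact hAU)
  obtain ⟨n, hn⟩ := (mapClusterPt_iff_frequently.1 hcluster _ hnhds).exists
  exact ⟨n, by simpa using hn⟩

/-- The lower triangular unipotent matrix; right multiplication by it perturbs the potential. -/
def shear (a : ℝ) : Matrix (Fin 2) (Fin 2) ℝ := !![1, 0; a, 1]

theorem det_shear (a : ℝ) : (shear a).det = 1 := by simp [shear, det_fin_two]

theorem trace_mul_shear (N : Matrix (Fin 2) (Fin 2) ℝ) (s : ℝ) :
    (N * shear s).trace = N.trace + s * N 0 1 := by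
  simp [shear, trace_fin_two, Matrix.mul_apply, Fin.sum_univ_two]
  ring

theorem trace_adjugate_mul_shear_commutator {N : Matrix (Fin 2) (Fin 2) ℝ} (hN : N.det = 1)
    (t : ℝ) :
    ((N * shear t).adjugate * N.adjugate * ((N * shear t) * N)).trace = 2 + t ^ 2 * N 0 1 ^ 2 := by
  obtain ⟨a, b, c, d, rfl⟩ : ∃ a b c d, N = !![a, b; c, d] := ⟨_, _, _, _, eta_fin_two N⟩
  rw [det_fin_two_of] at hN
  simp only [shear, mul_fin_two, adjugate_fin_two_of, trace_fin_two_of, of_apply, cons_val_zero,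
    cons_val_one]
  linear_combination (2 * (a * d - b * c) + 2 + t ^ 2 * b ^ 2) * hN

theorem exists_trace_pow_mul_pow_gt {A B : Matrix (Fin 2) (Fin 2) ℝ} (hA : A.det = 1)
    (hB : B.det = 1) (hAtr : |A.trace| < 2) (hBtr : |B.trace| < 2)
    {C : Matrix (Fin 2) (Fin 2) ℝ} (hcomm : 2 < (A.adjugate * B.adjugate * C).trace) :
    ∃ n m : ℕ, 2 < (A ^ n * B ^ m * C).trace := by
  obtain ⟨n, hn⟩ := exists_pow_mem_of_elliptic hA hAtr
    (U := {X | 2 < (X * B.adjugate * C).trace}) (isOpen_lt (by fun_prop) (by fun_prop)) hcomm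
  obtain ⟨m, hm⟩ := exists_pow_mem_of_elliptic hB hBtr
    (U := {X | 2 < (A ^ n * X * C).trace}) (isOpen_lt (by fun_prop) (by fun_prop)) hn
  exact ⟨n, m, hm⟩

/- If `N` is elliptic then so is `A = N * shear t` for small `t`, the commutator of `A⁻¹` and `N⁻¹`
is hyperbolic, and by recurrence the inverses can be approximated by positive powers. -/
theorem exists_hyperbolic_word {N : Matrix (Fin 2) (Fin 2) ℝ} (hN : N.det = 1) (hN01 : N 0 1 ≠ 0)
    {ε : ℝ} (hε : 0 < ε) :
    ∃ l : List ℝ, l ≠ [] ∧ (∀ s ∈ l, |s| ≤ ε) ∧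
      2 < |(l.map fun s => N * shear s).prod.trace| := by
  rcases le_or_gt 2 |N.trace| with htr | htr
  · obtain ⟨s, hs, hprod⟩ : ∃ s, |s| = ε ∧ 0 ≤ N.trace * (s * N 0 1) := by
      rcases le_total 0 (N.trace * N 0 1) with h | h
      · exact ⟨ε, abs_of_pos hε, by nlinarith⟩
      · exact ⟨-ε, by rw [abs_neg, abs_of_pos hε], by nlinarith⟩
    refine ⟨[s], by simp, by simpa using hs.le, ?_⟩
    rw [List.map_singleton, List.prod_singleton, trace_mul_shear,
      abs_add_eq_add_abs_iff _ _ |>.2 (mul_nonneg_iff.1 hprod), abs_mul, hs]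
    nlinarith [abs_pos.2 hN01]
  · set t := min ε ((2 - |N.trace|) / (2 * |N 0 1|))
    have ht : 0 < t := lt_min hε (div_pos (by linarith) (by positivity))
    have htN : t * |N 0 1| < 2 - |N.trace| := by
      have : t ≤ _ := min_le_right _ _
      rw [le_div_iff₀ (by positivity)] at this
      linarith
    have hshear : |(N * shear t).trace| < 2 := by
      rw [trace_mul_shear]
      calc _ ≤ |N.trace| + |t * N 0 1| := abs_add_le _ _
        _ < 2 := by rw [abs_mul, abs_of_pos ht]; linarith
    obtain ⟨n, m, hnm⟩ := exists_trace_pow_mul_pow_gt (by rw [det_mul, hN, det_shear, one_mul]) hN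
      hshear htr (C := N * shear t * N) (by
        rw [trace_adjugate_mul_shear_commutator hN]
        linarith [mul_pos (sq_pos_of_pos ht) (sq_pos_of_ne_zero hN01)])
    have hshear0 : shear 0 = 1 := by ext i j; fin_cases i <;> fin_cases j <;> rfl
    refine ⟨List.replicate n t ++ List.replicate m 0 ++ [t, 0], by simp, fun s hs => ?_, ?_⟩
    · simp only [List.mem_append, List.mem_replicate, List.mem_cons, List.not_mem_nil,
        or_false] at hs
      have hst : s = t ∨ s = 0 := by tauto
      rcases hst with rfl | rfl
      · rw [abs_of_pos ht]; exact min_le_left _ _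
      · simpa using hε.le
    · simpa [hshear0, mul_assoc] using hnm.trans_le (le_abs_self _)

end Elliptic

section GapOpening

open Matrix Polynomial

/-- The one-step transfer matrix of `H ψ = E ψ` at a site where the potential equals `v`; it maps
`(ψ n, ψ (n - 1))` to `(ψ (n + 1), ψ n)`. -/
def stepMatrix (E v : ℝ) : Matrix (Fin 2) (Fin 2) ℝ := !![E - v, -1; 1, 0]

/-- The transfer matrix of the sieved potential `lam * sieve V k` over `k` consecutive sites,
starting from a multiple `k * n` of `k` at which `V n = v`. -/
def sieveStep (lam : ℝ) (k : ℕ) (E v : ℝ) : Matrix (Fin 2) (Fin 2) ℝ :=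
  stepMatrix E 0 ^ (k - 1) * stepMatrix E (lam * v)

/-- The transfer matrix of `lam * sieve V k` over the `k * q` sites starting at `0`. -/
def monodromy (lam : ℝ) (k : ℕ) (E : ℝ) (V : ℤ → ℝ) (q : ℕ) : Matrix (Fin 2) (Fin 2) ℝ :=
  cocycle (fun n => sieveStep lam k E (V n)) 0 q

theorem det_stepMatrix (E v : ℝ) : (stepMatrix E v).det = 1 := by simp [stepMatrix, det_fin_two]

theorem stepMatrix_add (E v a : ℝ) : stepMatrix E (v + a) = stepMatrix E v * shear a := by
  rw [stepMatrix, stepMatrix, shear, mul_fin_two]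
  ext i j
  fin_cases i <;> fin_cases j <;> simp
  ring

theorem stepMatrix_zero_pow_apply (E : ℝ) (n : ℕ) :
    (stepMatrix E 0 ^ n) 0 0 = (Chebyshev.S ℝ n).eval E := by
  suffices h : (stepMatrix E 0 ^ n) 0 0 = (Chebyshev.S ℝ n).eval E ∧
      (stepMatrix E 0 ^ n) 1 0 = (Chebyshev.S ℝ (n - 1)).eval E from h.1
  induction n with
  | zero => simp
  | succ n ih =>
    rw [pow_succ', Matrix.mul_apply, Matrix.mul_apply, Fin.sum_univ_two, Fin.sum_univ_two, ih.1,
      ih.2, Nat.cast_succ, Chebyshev.S_add_one, add_sub_cancel_right]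
    simp [stepMatrix, sub_eq_add_neg]

theorem finite_stepMatrix_zero_pow_apply_eq_zero (n : ℕ) :
    {E | (stepMatrix E 0 ^ n) 0 0 = 0}.Finite := by
  have hne : Chebyshev.S ℝ n ≠ 0 := fun h => by
    have := Chebyshev.S_eval_two (R := ℝ) n
    rw [h, eval_zero] at this
    exact absurd this (by positivity)
  simp only [stepMatrix_zero_pow_apply]
  exact finite_setOfPred_isRoot hne

theorem det_sieveStep (lam : ℝ) (k : ℕ) (E v : ℝ) : (sieveStep lam k E v).det = 1 := by
  rw [sieveStep, det_mul, det_pow, det_stepMatrix, det_stepMatrix, one_pow, one_mul]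

theorem sieveStep_add (lam : ℝ) (k : ℕ) (E v a : ℝ) :
    sieveStep lam k E (v + a) = sieveStep lam k E v * shear (lam * a) := by
  rw [sieveStep, mul_add, stepMatrix_add, ← mul_assoc, ← sieveStep]

theorem sieveStep_apply_zero_one (lam : ℝ) (k : ℕ) (E v : ℝ) :
    sieveStep lam k E v 0 1 = -(stepMatrix E 0 ^ (k - 1)) 0 0 := by
  rw [sieveStep, Matrix.mul_apply, Fin.sum_univ_two]
  simp [stepMatrix]

theorem monodromy_add_sieve {V : ℤ → ℝ} {q : ℕ} (hq : 0 < q) (hV : Function.Periodic V q)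
    (lam : ℝ) (k : ℕ) (E : ℝ) (a : ℤ → ℝ) (r : ℕ) :
    monodromy lam k E (V + sieve a q) (q * r)
      = cocycle (fun i => monodromy lam k E V q * shear (lam * a i)) 0 r := by
  obtain ⟨p, rfl⟩ : ∃ p, q = 1 + p := ⟨q - 1, by omega⟩
  have hblocks := cocycle_mul (fun n => sieveStep lam k E ((V + sieve a (1 + p)) n)) (1 + p) 0 r
  rw [mul_zero] at hblocks
  rw [monodromy, hblocks]
  refine cocycle_congr fun i _ => ?_
  rw [zero_add]
  have hper : ∀ m : ℤ, V (((1 + p : ℕ) : ℤ) * i + m) = V m := fun m => by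
    rw [add_comm, mul_comm]
    exact hV.int_mul i m
  have htail : cocycle (fun n => sieveStep lam k E ((V + sieve a (1 + p)) n))
      (((1 + p : ℕ) : ℤ) * i + 1) p = cocycle (fun n => sieveStep lam k E (V n)) (0 + 1) p :=
    cocycle_congr fun j hj => by
      have hsieve := sieve_mul_add (Nat.succ_ne_zero j) (by omega : j + 1 < 1 + p) a i
      have hcast : ((1 + p : ℕ) : ℤ) * i + ((j + 1 : ℕ) : ℤ) = ((1 + p : ℕ) : ℤ) * i + 1 + j := by
        push_cast; ring
      rw [hcast] at hsieve
      rw [Pi.add_apply, hsieve, add_zero, add_assoc, hper, zero_add]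
  have hhead : V (((1 + p : ℕ) : ℤ) * i) = V 0 := by simpa using hper 0
  rw [monodromy, cocycle_add, cocycle_add, cocycle_one, cocycle_one, Nat.cast_one, htail,
    Pi.add_apply, hhead, sieve_mul hq, sieveStep_add, mul_assoc]

theorem mul_shear_mul_apply_ne_zero {L K : Matrix (Fin 2) (Fin 2) ℝ} (hL : L.det = 1)
    (hK : K 0 1 ≠ 0) (hLK : (L * K) 0 1 = 0) {c : ℝ} (hc : c ≠ 0) : (L * shear c * K) 0 1 ≠ 0 := by
  have hentry : (L * shear c * K) 0 1 = (L * K) 0 1 + c * L 0 1 * K 0 1 := by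
    simp [shear, Matrix.mul_apply, Fin.sum_univ_two]
    ring
  have hL01 : L 0 1 ≠ 0 := fun h0 => by
    rw [Matrix.mul_apply, Fin.sum_univ_two, h0, zero_mul, add_zero] at hLK
    rw [det_fin_two, h0, (mul_eq_zero.1 hLK).resolve_right hK] at hL
    simp at hL
  rw [hentry, hLK, zero_add]
  exact mul_ne_zero (mul_ne_zero hc hL01) hK

theorem monodromy_apply_zero_one_ne_zero {lam : ℝ} (hlam : lam ≠ 0) {k : ℕ} {E : ℝ}
    (hE : (stepMatrix E 0 ^ (k - 1)) 0 0 ≠ 0) {V : ℤ → ℝ} {q : ℕ}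
    (hV : monodromy lam k E V (q + 2) 0 1 = 0) {b : ℝ} (hb : b ≠ 0) {V' : ℤ → ℝ}
    (h1 : V' 1 = V 1 + b) (hV' : ∀ n ∈ Ico (0 : ℤ) (q + 2), n ≠ 1 → V' n = V n) :
    monodromy lam k E V' (q + 2) 0 1 ≠ 0 := by
  have hsplit : ∀ U : ℤ → ℝ, monodromy lam k E U (q + 2)
      = cocycle (fun n => sieveStep lam k E (U n)) 2 q * sieveStep lam k E (U 1) *
        sieveStep lam k E (U 0) := fun U => by
    rw [monodromy, add_comm q, cocycle_add, mul_assoc]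
    simp [cocycle]
  have htail : cocycle (fun n => sieveStep lam k E (V' n)) 2 q
      = cocycle (fun n => sieveStep lam k E (V n)) 2 q :=
    cocycle_congr fun i hi => by rw [hV' _ ⟨by positivity, by omega⟩ (by omega)]
  rw [hsplit] at hV
  rw [hsplit, htail, h1, hV' 0 ⟨le_rfl, by positivity⟩ zero_ne_one, sieveStep_add, ← mul_assoc]
  refine mul_shear_mul_apply_ne_zero ?_ ?_ hV (mul_ne_zero hlam hb)
  · rw [det_mul, det_cocycle fun n => det_sieveStep lam k E _, det_sieveStep, one_mul]
  · rw [sieveStep_apply_zero_one]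
    exact neg_ne_zero.2 hE

theorem abs_sieve_le {a : ℤ → ℝ} {ε : ℝ} (hε : 0 ≤ ε) (ha : ∀ n, |a n| ≤ ε) (q : ℕ) (n : ℤ) :
    |sieve a q n| ≤ ε := by
  unfold sieve
  split_ifs
  · exact ha _
  · rwa [abs_zero]

theorem exists_periodic_monodromy_apply_ne_zero {lam : ℝ} (hlam : lam ≠ 0) {k : ℕ} {E : ℝ}
    (hE : (stepMatrix E 0 ^ (k - 1)) 0 0 ≠ 0) {V : ℤ → ℝ} {q : ℕ} (hq : 0 < q)
    (hV : Function.Periodic V q) {ε : ℝ} (hε : 0 < ε) :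
    ∃ V' : ℤ → ℝ, ∃ q' > 0, Function.Periodic V' (q' : ℕ) ∧ (∀ n, |V' n - V n| ≤ ε) ∧
      monodromy lam k E V' q' 0 1 ≠ 0 := by
  obtain ⟨p, hp⟩ : ∃ p, q * 2 = p + 2 := ⟨q * 2 - 2, by omega⟩
  have hVp : Function.Periodic V (p + 2 : ℕ) := by
    rw [← hp, Nat.cast_mul, mul_comm]
    exact hV.nat_mul 2
  by_cases hN : monodromy lam k E V (p + 2) 0 1 = 0
  · let a : ℤ → ℝ := sieve (fun _ => ε) (p + 2)
    refine ⟨fun n => V n + a (n - 1), p + 2, by omega, fun n => ?_, fun n => ?_,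
      monodromy_apply_zero_one_ne_zero hlam hE hN hε.ne' ?_ fun n hn hn1 => ?_⟩
    · have ha : Function.Periodic a (p + 2 : ℕ) := by
        simpa using sieve_periodic (q := 1) (V := fun _ => ε) (k := p + 2) (by omega) fun _ => rfl
      change V (n + _) + a (n + _ - 1) = V n + a (n - 1)
      rw [hVp n, add_sub_right_comm, ha]
    · rw [add_sub_cancel_left]
      exact abs_sieve_le hε.le (fun _ => (abs_of_pos hε).le) _ _
    · simp [a, sieve]
    · have hnot : ¬ ((p + 2 : ℕ) : ℤ) ∣ n - 1 := fun hdvd => by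
        obtain ⟨hn0, hnp⟩ := hn
        refine hn1 (sub_eq_zero.1 (Int.eq_zero_of_abs_lt_dvd hdvd (abs_lt.2 ⟨?_, ?_⟩))) <;>
          push_cast <;> linarith
      simp only [a, sieve, if_neg hnot, add_zero]
  · exact ⟨V, p + 2, by omega, hVp, fun n => by rw [sub_self, abs_zero]; exact hε.le, hN⟩

theorem exists_periodic_two_lt_abs_trace_monodromy {lam : ℝ} (hlam : lam ≠ 0) {k : ℕ} {E : ℝ}
    (hE : (stepMatrix E 0 ^ (k - 1)) 0 0 ≠ 0) {V : ℤ → ℝ} {q : ℕ} (hq : 0 < q)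
    (hV : Function.Periodic V q) {ε : ℝ} (hε : 0 < ε) :
    ∃ V' : ℤ → ℝ, ∃ q' > 0, Function.Periodic V' (q' : ℕ) ∧ (∀ n, |V' n - V n| ≤ ε) ∧
      2 < |(monodromy lam k E V' q').trace| := by
  obtain ⟨V', q', hq', hV', hdist, hN⟩ :=
    exists_periodic_monodromy_apply_ne_zero hlam hE hq hV (half_pos hε)
  have hdet : (monodromy lam k E V' q').det = 1 := det_cocycle (fun _ => det_sieveStep _ _ _ _) _ _
  obtain ⟨l, hl, hlε, htr⟩ := exists_hyperbolic_word hdet hN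
    (mul_pos (abs_pos.2 hlam) (half_pos hε))
  obtain ⟨a, ha, hal, hprod⟩ := exists_periodic_cocycle_eq_prod (M := Matrix (Fin 2) (Fin 2) ℝ) hl
  refine ⟨V' + sieve (fun n => a n / lam) q', q' * l.length,
    Nat.mul_pos hq' (List.length_pos_iff.2 hl), ?_, fun n => ?_, ?_⟩
  · refine Function.Periodic.add ?_ (sieve_periodic hq' fun n => by rw [ha n])
    rw [mul_comm, Nat.cast_mul]
    exact hV'.nat_mul l.length
  · have hsmall : |sieve (fun n => a n / lam) q' n| ≤ ε / 2 := abs_sieve_le (half_pos hε).le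
      (fun n => by
        rw [abs_div, div_le_iff₀' (abs_pos.2 hlam)]
        exact hlε _ (hal n)) _ _
    calc |(V' + sieve (fun n => a n / lam) q') n - V n|
        = |(V' n - V n) + sieve (fun n => a n / lam) q' n| := by
          rw [Pi.add_apply, add_sub_right_comm]
      _ ≤ ε / 2 + ε / 2 := (abs_add_le _ _).trans (add_le_add (hdist n) hsmall)
      _ = ε := add_halves ε
  · rw [monodromy_add_sieve hq' hV']
    simp only [mul_div_cancel₀ _ hlam]
    rwa [hprod fun s => monodromy lam k E V' q' * shear s]

end GapOpening

section Decay

open Matrix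

theorem cocycle_stepMatrix_mulVec {U f : ℤ → ℝ} {E : ℝ} {n : ℤ} {j : ℕ}
    (hf : ∀ m, n ≤ m → m < n + j → f (m - 1) + f (m + 1) + U m * f m = E * f m) :
    cocycle (fun m => stepMatrix E (U m)) n j *ᵥ ![f n, f (n - 1)]
      = ![f (n + j), f (n + j - 1)] := by
  induction j with
  | zero => simp [cocycle]
  | succ j ih =>
    have hsite := hf (n + j) (by omega) (by omega)
    rw [cocycle, ← mulVec_mulVec, ih fun m hm hmj => hf m hm (by omega), Nat.cast_succ, ← add_assoc,
      add_sub_cancel_right]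
    ext i
    fin_cases i
    · simp only [stepMatrix, Fin.zero_eta, mulVec_cons, mulVec_empty, add_zero, Pi.add_apply,
        Pi.smul_apply, Function.comp_apply, cons_val_zero, head_cons, tail_cons, smul_eq_mul,
        mul_neg, mul_one]
      linear_combination -hsite
    · simp [stepMatrix]

theorem cocycle_stepMatrix_sieve {k : ℕ} (hk : 0 < k) (lam E : ℝ) (V : ℤ → ℝ) (n : ℤ) (q : ℕ) :
    cocycle (fun m => stepMatrix E (lam * sieve V k m)) (k * n) (k * q)
      = cocycle (fun m => sieveStep lam k E (V m)) n q := by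
  rw [cocycle_mul]
  refine cocycle_congr fun i _ => ?_
  obtain ⟨p, rfl⟩ : ∃ p, k = 1 + p := ⟨k - 1, by omega⟩
  have htail : cocycle (fun m => stepMatrix E (lam * sieve V (1 + p) m))
      (((1 + p : ℕ) : ℤ) * (n + i) + (1 : ℕ)) p = cocycle (fun _ => stepMatrix E 0) 0 p :=
    cocycle_congr fun j hj => by
      have := sieve_mul_add (by omega : 1 + j ≠ 0) (by omega : 1 + j < 1 + p) V (n + i)
      rw [add_assoc, ← Nat.cast_add, this, mul_zero]
  rw [cocycle_add, htail, cocycle_one, cocycle_const, sieve_mul hk, sieveStep,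
    Nat.add_sub_cancel_left]

theorem monodromy_eq_cocycle {V : ℤ → ℝ} {q : ℕ} (hV : Function.Periodic V q) (lam : ℝ) (k : ℕ)
    (E : ℝ) (s : ℤ) :
    cocycle (fun n => sieveStep lam k E (V n)) (q * s) q = monodromy lam k E V q :=
  cocycle_congr fun i _ => by
    rw [zero_add, add_comm, mul_comm, show V (i + s * q) = V i from hV.int_mul s i]

theorem add_eq_trace_monodromy_mul {V : ℤ → ℝ} {q : ℕ} (hV : Function.Periodic V q) {k : ℕ}
    (hk : 0 < k) {lam E : ℝ} {f : ℤ → ℝ} {s : ℤ}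
    (hf : ∀ n, k * (q * (s - 1)) ≤ n → n < k * (q * (s + 1)) →
      f (n - 1) + f (n + 1) + lam * sieve V k n * f n = E * f n) :
    f (k * (q * (s + 1))) + f (k * (q * (s - 1)))
      = (monodromy lam k E V q).trace * f (k * (q * s)) := by
  set M := monodromy lam k E V q
  let Ψ : ℤ → Fin 2 → ℝ := fun s => ![f (k * (q * s)), f (k * (q * s) - 1)]
  have hkq : (0 : ℤ) ≤ k * q := by positivity
  have hstep : ∀ t, s - 1 ≤ t → t ≤ s → M *ᵥ Ψ t = Ψ (t + 1) := fun t ht hts => by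
    have hnext : (k : ℤ) * (q * t) + (k * q : ℕ) = k * (q * (t + 1)) := by push_cast; ring
    have := cocycle_stepMatrix_mulVec (U := fun n => lam * sieve V k n) (f := f) (E := E)
      (n := k * (q * t)) (j := k * q) fun m hm hmt => hf m
        (by nlinarith) (by rw [hnext] at hmt; nlinarith)
    rwa [cocycle_stepMatrix_sieve hk, monodromy_eq_cocycle hV, hnext] at this
  have hM : M.det = 1 := det_cocycle (fun _ => det_sieveStep _ _ _ _) _ _
  have hΨ : Ψ (s + 1) = M.trace • Ψ s - Ψ (s - 1) := by
    have hs := hstep (s - 1) le_rfl (by omega)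
    rw [sub_add_cancel] at hs
    rw [← hstep s (by omega) le_rfl, ← hs, mulVec_mulVec, sq_eq_trace_smul_sub_one hM, sub_mulVec,
      smul_mulVec, one_mulVec]
  have := congrFun hΨ 0
  simp only [Ψ, Pi.sub_apply, Pi.smul_apply, cons_val_zero, smul_eq_mul] at this
  rw [this, sub_add_cancel]

theorem abs_le_of_recurrence {x : ℤ → ℝ} {C D τ : ℝ} (hx : ∀ s, |x s| ≤ C) (hτ : 0 < τ)
    (hD : τ ≤ |D|) (i : ℕ) :
    ∀ c : ℤ, (∀ s, |s - c| < i → x (s + 1) + x (s - 1) = D * x s) → |x c| ≤ (2 / τ) ^ i * C := by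
  induction i with
  | zero => intro c _; simpa using hx c
  | succ i ih =>
    intro c hrec
    have hnear : ∀ s, |s - c| ≤ 1 → |x s| ≤ (2 / τ) ^ i * C := fun s hs => ih s fun t ht =>
      hrec t (by have := abs_sub_le t s c; push_cast; linarith)
    have hc : |D| * |x c| ≤ 2 * ((2 / τ) ^ i * C) := by
      rw [← abs_mul, ← hrec c (by simp), two_mul]
      exact (abs_add_le _ _).trans (add_le_add (hnear _ (by simp)) (hnear _ (by simp)))
    calc |x c| ≤ 2 * ((2 / τ) ^ i * C) / τ := by
          rw [le_div_iff₀ hτ, mul_comm]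
          exact (mul_le_mul_of_nonneg_right hD (abs_nonneg _)).trans hc
      _ = (2 / τ) ^ (i + 1) * C := by ring

theorem sieve_congr {V V' : ℤ → ℝ} {k : ℕ} (hk : 0 < k) {a b : ℤ}
    (h : ∀ n, a ≤ n → n < b → V n = V' n) {n : ℤ} (han : k * a ≤ n) (hnb : n < k * b) :
    sieve V k n = sieve V' k n := by
  have hk : (0 : ℤ) < k := by exact_mod_cast hk
  exact if_congr Iff.rfl (h _ (Int.le_ediv_of_mul_le hk (by linarith))
    (Int.ediv_lt_of_lt_mul hk (by linarith))) rfl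

theorem abs_le_of_le_abs_trace_monodromy {W V : ℤ → ℝ} {q : ℕ} (hW : Function.Periodic W q) {k : ℕ}
    (hk : 0 < k) {c : ℤ} (hqc : (q : ℤ) ∣ c) {i : ℕ}
    (hV : ∀ n, c - i * q ≤ n → n < c + i * q → V n = W n) {lam E C τ : ℝ} {f : ℤ → ℝ}
    (hfC : ∀ n, |f n| ≤ C)
    (hf : ∀ n, k * (c - i * q) ≤ n → n < k * (c + i * q) →
      f (n - 1) + f (n + 1) + lam * sieve V k n * f n = E * f n)
    (hτ : 0 < τ) (hgap : τ ≤ |(monodromy lam k E W q).trace|) :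
    |f (k * c)| ≤ (2 / τ) ^ i * C := by
  obtain ⟨t, rfl⟩ := hqc
  refine abs_le_of_recurrence (x := fun s => f (k * (q * s))) (fun s => hfC _) hτ hgap i t
    fun s hs => add_eq_trace_monodromy_mul hW hk fun n hlow hhigh => ?_
  rw [abs_lt] at hs
  have hlow' : (k : ℤ) * (q * t - i * q) ≤ k * (q * (s - 1)) := by
    have : (q : ℤ) * (t - i) ≤ q * (s - 1) :=
      mul_le_mul_of_nonneg_left (by linarith) (by positivity)
    exact mul_le_mul_of_nonneg_left (by linarith) (by positivity)
  have hhigh' : (k : ℤ) * (q * (s + 1)) ≤ k * (q * t + i * q) := by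
    have : (q : ℤ) * (s + 1) ≤ q * (t + i) :=
      mul_le_mul_of_nonneg_left (by linarith) (by positivity)
    exact mul_le_mul_of_nonneg_left (by linarith) (by positivity)
  rw [← sieve_congr hk hV (hlow'.trans hlow) (hhigh.trans_le hhigh')]
  exact hf n (hlow'.trans hlow) (hhigh.trans_le hhigh')

end Decay

section Box

theorem exists_finset_forall_near_of_isSelfAdjoint {H : Type*} [NormedAddCommGroup H]
    [InnerProductSpace ℝ H] [CompleteSpace H] {A : H →L[ℝ] H} (hA : IsSelfAdjoint A)
    (K : Submodule ℝ H) [FiniteDimensional ℝ K] :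
    ∃ F : Finset ℝ, F.card ≤ Module.finrank ℝ K ∧ ∀ E : ℝ, ∀ f ∈ K, f ≠ 0 → ∀ h : H,
      A f - E • f - h ∈ Kᗮ → ∃ t ∈ F, |t - E| * ‖f‖ ≤ ‖h‖ := by
  let T : K →L[ℝ] K := K.subtypeL.adjoint ∘L A ∘L K.subtypeL
  refine ⟨(T : K →ₗ[ℝ] K).charpoly.roots.toFinset, ?_, fun E f hf hf0 h hh => ?_⟩
  · exact (Multiset.toFinset_card_le _).trans ((Polynomial.card_roots' _).trans_eq
      (LinearMap.charpoly_natDegree _))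
  · obtain ⟨t, ht, htE⟩ := exists_mem_spectrum_abs_sub_mul_norm_le
      (hA.adjoint_conj K.subtypeL) E (f := ⟨f, hf⟩) (by simpa using hf0)
    have htT : t ∈ spectrum ℝ (T : K →ₗ[ℝ] K) := by
      rwa [← AlgEquiv.spectrum_eq (Module.End.toContinuousLinearMap (𝕜 := ℝ) K)]
    have hroot := (Module.End.mem_spectrum_iff_isRoot_charpoly _ _).1 htT
    refine ⟨t, ?_, htE.trans ?_⟩
    · exact Multiset.mem_toFinset.2
        ((Polynomial.mem_roots (LinearMap.charpoly_monic _).ne_zero).2 hroot)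
    · have hproj : T ⟨f, hf⟩ - E • (⟨f, hf⟩ : K) = K.orthogonalProjectionOnto h := by
        have h0 := K.orthogonalProjectionOnto_eq_zero_iff.2 hh
        have hfK : K.orthogonalProjectionOnto f = ⟨f, hf⟩ :=
          K.orthogonalProjectionOnto_mem_subspace_eq_self ⟨f, hf⟩
        rw [map_sub, map_sub, map_smul, hfK, sub_eq_zero] at h0
        rw [← h0, ← K.adjoint_subtypeL]
        rfl
      exact (congrArg norm hproj).trans_le (K.norm_orthogonalProjectionOnto_apply_le h)

/-- The sequences in `ℓ²(ℤ)` that vanish outside `s`. -/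
def supportedOn (s : Set ℤ) : Submodule ℝ Ell2 where
  carrier := {f | ∀ n ∉ s, f n = 0}
  add_mem' hf hg n hn := by rw [lp.coeFn_add, Pi.add_apply, hf n hn, hg n hn, add_zero]
  zero_mem' _ _ := rfl
  smul_mem' c f hf n hn := by rw [lp.coeFn_smul, Pi.smul_apply, hf n hn, smul_zero]

theorem mem_orthogonal_supportedOn {s : Set ℤ} {h : Ell2} (hh : ∀ n ∈ s, h n = 0) :
    h ∈ (supportedOn s)ᗮ := fun f hf => by
  rw [lp.inner_eq_tsum]
  refine (tsum_congr fun n => ?_).trans tsum_zero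
  by_cases hn : n ∈ s
  · rw [hh n hn, inner_zero_right]
  · rw [hf n hn, inner_zero_left]

theorem finiteDimensional_supportedOn_and_finrank_le (s : Finset ℤ) :
    FiniteDimensional ℝ (supportedOn s) ∧ Module.finrank ℝ (supportedOn s) ≤ s.card := by
  let φ : supportedOn s →ₗ[ℝ] (s → ℝ) :=
    { toFun := fun f n => (f : Ell2) n
      map_add' := fun _ _ => rfl
      map_smul' := fun _ _ => rfl }
  have hφ : Function.Injective φ := fun f g hfg => Subtype.ext <| lp.ext <| funext fun n => by
    by_cases hn : n ∈ s
    · exact congrFun hfg ⟨n, hn⟩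
    · rw [f.2 n hn, g.2 n hn]
  have hrank := LinearMap.finrank_le_finrank_of_injective hφ
  rw [Module.finrank_fintype_fun_eq_card, Fintype.card_coe] at hrank
  exact ⟨Module.Finite.of_injective φ hφ, hrank⟩

theorem sum_Ico_int (b : ℤ) (P : ℕ) (h : ℤ → ℝ) :
    ∑ n ∈ Finset.Ico b (b + P), h n = ∑ r ∈ Finset.range P, h (b + r) := by
  symm
  refine Finset.sum_bij (fun r _ => b + (r : ℤ)) (fun r hr => ?_) (fun r _ r' _ h => ?_)
    (fun n hn => ?_) fun _ _ => rfl
  · simpa using hr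
  · simpa using h
  · rw [Finset.mem_Ico] at hn
    exact ⟨(n - b).toNat, by rw [Finset.mem_range]; omega, by omega⟩

theorem half_le_norm_sum_single {f : ℤ → ℝ} {b : ℤ} {P : ℕ}
    (hf1 : ∑ r ∈ Finset.range P, f (b + r) ^ 2 = 1) (hfb : |f b| ≤ 1 / 2) :
    1 / 2 ≤ ‖(∑ n ∈ Finset.Ioo b (b + P), lp.single 2 n (f n) : Ell2)‖ := by
  have hP : 0 < P := Nat.pos_of_ne_zero fun h => by simp [h] at hf1
  have hnorm := lp.norm_sum_single (p := 2) (E := fun _ : ℤ => ℝ) (by simp) f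
    (Finset.Ioo b (b + P))
  rw [← sum_Ico_int b P fun n => f n ^ 2, ← Finset.Ioo_insert_left (by omega),
    Finset.sum_insert Finset.left_notMem_Ioo] at hf1
  simp only [ENNReal.toReal_ofNat, Real.rpow_ofNat, Real.norm_eq_abs, sq_abs] at hnorm
  have hb : f b ^ 2 ≤ (1 / 2) ^ 2 := sq_le_sq' (abs_le.1 hfb).1 (abs_le.1 hfb).2
  exact abs_le_of_sq_le_sq' (by linarith) (norm_nonneg _) |>.2

theorem schrodinger_sum_single_apply_sub (W : ℤ →ᵇ ℝ) {b : ℤ} {P : ℕ} {E : ℝ} {f : ℤ → ℝ} {n : ℤ}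
    (hn : n ∈ Finset.Ioo b (b + P)) (hf : f (n - 1) + f (n + 1) + W n * f n = E * f n) :
    let g : Ell2 := ∑ x ∈ Finset.Ioo b (b + P), lp.single 2 x (f x)
    schrodinger W g n - E * g n =
      -((if n = b + 1 then f b else 0) + if n = b + P - 1 then f (b + P) else 0) := by
  intro g
  have hg : ∀ x, g x = if b < x ∧ x < b + P then f x else 0 := fun x => by
    simp only [g, ell2_sum_single_apply, Finset.mem_Ioo]
  have hn' := Finset.mem_Ioo.1 hn
  have hleft : g (n - 1) = f (n - 1) - if n = b + 1 then f b else 0 := by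
    rw [hg]
    rcases eq_or_ne n (b + 1) with rfl | hne
    · rw [if_neg (by omega), if_pos rfl, add_sub_cancel_right, sub_self]
    · rw [if_pos (by omega), if_neg hne, sub_zero]
  have hright : g (n + 1) = f (n + 1) - if n = b + P - 1 then f (b + P) else 0 := by
    rw [hg]
    rcases eq_or_ne n (b + P - 1) with rfl | hne
    · rw [if_neg (by omega), if_pos rfl, sub_add_cancel, sub_self]
    · rw [if_pos (by omega), if_neg hne, sub_zero]
  rw [schrodinger_apply, hleft, hright, hg, if_pos hn']
  linear_combination hf

/- The set `F` consists of the eigenvalues of the restriction of `H_W` to the box `(b, b + P)` with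
Dirichlet boundary conditions. -/
theorem exists_finset_box_eigenvalues (W : ℤ →ᵇ ℝ) (b : ℤ) (P : ℕ) :
    ∃ F : Finset ℝ, F.card ≤ P ∧ ∀ (E : ℝ) (f : ℤ → ℝ) (δ : ℝ),
      ∑ r ∈ Finset.range P, f (b + r) ^ 2 = 1 →
      (∀ n, b < n → n < b + P → f (n - 1) + f (n + 1) + W n * f n = E * f n) →
      |f b| ≤ δ → |f (b + P)| ≤ δ → δ ≤ 1 / 2 → ∃ t ∈ F, |t - E| ≤ 4 * δ := by
  set s := Finset.Ioo b (b + P) with hs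
  obtain ⟨hfin, hrank⟩ := finiteDimensional_supportedOn_and_finrank_le s
  obtain ⟨F, hF, hnear⟩ :=
    exists_finset_forall_near_of_isSelfAdjoint (isSelfAdjoint_schrodinger W) (supportedOn s)
  refine ⟨F, hF.trans (hrank.trans (by rw [hs, Int.card_Ioo]; omega)),
    fun E f δ hf1 hf hfb hfP hδ => ?_⟩
  let g : Ell2 := ∑ n ∈ s, lp.single 2 n (f n)
  have hg : g ∈ supportedOn (s : Set ℤ) := fun n hn =>
    (ell2_sum_single_apply s f n).trans (if_neg hn)
  have hg1 : 1 / 2 ≤ ‖g‖ := half_le_norm_sum_single hf1 (hfb.trans hδ)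
  let h : Ell2 := -(lp.single 2 (b + 1) (f b) + lp.single 2 (b + P - 1) (f (b + P)))
  have hh : ‖h‖ ≤ 2 * δ := by
    rw [norm_neg, two_mul]
    refine (norm_add_le _ _).trans (add_le_add ?_ ?_) <;>
      rwa [lp.norm_single (by simp), Real.norm_eq_abs]
  have horth : schrodinger W g - E • g - h ∈ (supportedOn (s : Set ℤ))ᗮ :=
    mem_orthogonal_supportedOn fun n hn => by
      have hhn : h n =
          -((if n = b + 1 then f b else 0) + if n = b + P - 1 then f (b + P) else 0) := by
        simp only [h, lp.coeFn_neg, lp.coeFn_add, lp.coeFn_single, Pi.neg_apply, Pi.add_apply,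
          Pi.single_apply]
      have hn' := Finset.mem_Ioo.1 hn
      exact sub_eq_zero.2 ((schrodinger_sum_single_apply_sub W hn
        (hf n hn'.1 hn'.2)).trans hhn.symm)
  obtain ⟨t, ht, htE⟩ := hnear E g hg (norm_pos_iff.1 (by linarith)) h horth
  exact ⟨t, ht, by nlinarith [abs_nonneg (t - E)]⟩

end Box

section Concatenation

theorem exists_finset_le_of_isCompact {α Y : Type*} [Nonempty α] [TopologicalSpace Y] {K : Set Y}
    (hK : IsCompact K) {φ : α → Y → ℝ} (hφ : ∀ a, Continuous (φ a)) {c : ℝ}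
    (h : ∀ y ∈ K, ∃ a, c < φ a y) :
    ∃ (s : Finset α) (τ : ℝ), s.Nonempty ∧ c < τ ∧ ∀ y ∈ K, ∃ a ∈ s, τ ≤ φ a y := by
  classical
  obtain ⟨t, ht⟩ := hK.elim_finite_subcover (fun b : α × Ioi c => {y | (b.2 : ℝ) < φ b.1 y})
    (fun b => isOpen_lt continuous_const (hφ b.1)) fun y hy => by
      obtain ⟨a, ha⟩ := h y hy
      obtain ⟨τ, hcτ, hτ⟩ := exists_between ha
      exact mem_iUnion.2 ⟨(a, ⟨τ, hcτ⟩), hτ⟩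
  obtain ⟨τ, hτ⟩ := Finite.exists_ge fun b : t => b.1.2
  refine ⟨insert (Classical.arbitrary α) (t.image Prod.fst), τ, Finset.insert_nonempty _ _, τ.2,
    fun y hy => ?_⟩
  obtain ⟨b, hb, hby⟩ := mem_iUnion₂.1 (ht hy)
  exact ⟨b.1, Finset.mem_insert_of_mem (Finset.mem_image_of_mem _ hb),
    (Subtype.coe_le_coe.2 (hτ ⟨b, hb⟩)).trans (le_of_lt hby)⟩

theorem exists_periodic_concatenation {α : Type*} {s : Finset α} (hs : s.Nonempty)
    {W : α → ℤ → ℝ} {L : ℕ} (hL : 0 < L) (hW : ∀ a ∈ s, Function.Periodic (W a) L) :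
    ∃ V : ℤ → ℝ, Function.Periodic V (s.card * L : ℕ) ∧ (∀ n, ∃ a ∈ s, V n = W a n) ∧
      ∀ a ∈ s, ∃ t : ℤ, ∀ n, t * L ≤ n → n < (t + 1) * L → V n = W a n := by
  have hL' : (0 : ℤ) < L := by exact_mod_cast hL
  have hcard : (0 : ℤ) < s.card := by exact_mod_cast hs.card_pos
  let e := s.equivFin
  let g : ℤ → s := fun t => e.symm ⟨(t % s.card).toNat, by
    have := Int.emod_lt_of_pos t hcard
    omega⟩
  have hg : Function.Periodic g s.card := fun t => by simp only [g, Int.add_emod_right]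
  refine ⟨fun n => W (g (n / L)) n, fun n => ?_, fun n => ⟨_, (g (n / L)).2, rfl⟩, fun a ha => ?_⟩
  · have hblock : (n + (s.card * L : ℕ)) / L = n / L + s.card := by
      rw [Nat.cast_mul, Int.add_mul_ediv_right _ _ hL'.ne']
    have hWn := (hW _ (g (n / L)).2).nat_mul s.card n
    rw [← Nat.cast_mul] at hWn
    simp only [hblock, hg (n / L), hWn]
  · refine ⟨(e ⟨a, ha⟩ : ℕ), fun n hlow hhigh => ?_⟩
    have hn : n / L = (e ⟨a, ha⟩ : ℕ) :=
      (Int.ediv_eq_iff_of_pos hL').2 ⟨hlow, by linarith⟩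
    have hga : g (e ⟨a, ha⟩ : ℕ) = ⟨a, ha⟩ := by
      rw [← e.symm_apply_apply ⟨a, ha⟩]
      refine congrArg e.symm (Fin.ext ?_)
      rw [e.symm_apply_apply]
      have := Int.emod_eq_of_lt (Int.natCast_nonneg (e ⟨a, ha⟩))
        (by exact_mod_cast (e ⟨a, ha⟩).2 : ((e ⟨a, ha⟩ : ℕ) : ℤ) < s.card)
      simp only [this, Int.toNat_natCast]
    simp only [hn, hga]

/- A solution with energy in a gap of `W` decays from both ends of the window where `V` agrees
with `W` to its centre `c`, so cutting the line at `c` and at `c + N` costs almost nothing. -/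
theorem exists_finset_near_of_eq_on_window {V : ℤ →ᵇ ℝ} {N : ℕ} (hN : 0 < N)
    (hV : Function.Periodic V N) {W : ℤ → ℝ} {p : ℕ} (hW : Function.Periodic W p) (hpN : p ∣ N)
    {c : ℤ} (hpc : (p : ℤ) ∣ c) {i : ℕ} (hipN : i * p ≤ N)
    (hVW : ∀ n, c - i * p ≤ n → n < c + i * p → V n = W n) {k : ℕ} (hk : 0 < k) (lam : ℝ) {τ : ℝ}
    (hτ : 0 < τ) (hi : (2 / τ) ^ i * 4 ≤ 1 / 2) :
    ∃ F : Finset ℝ, F.card ≤ k * N ∧ ∀ E ∈ SchrodingerSpectrum (scaledSieve lam k V),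
      τ ≤ |(monodromy lam k E W p).trace| → ∃ x ∈ F, |x - E| ≤ 16 * (2 / τ) ^ i := by
  obtain ⟨F, hF, hnear⟩ := exists_finset_box_eigenvalues (scaledSieve lam k V) (k * c) (k * N)
  refine ⟨F, hF, fun E hE hgap => ?_⟩
  have hkN : 0 < k * N := Nat.mul_pos hk hN
  obtain ⟨f, hf4, hf1, hf⟩ := exists_local_solution (W := scaledSieve lam k V) hkN
    (fun n => congrArg (lam * ·) (sieve_periodic hk hV n)) hE (k * c)
  simp only [scaledSieve_apply] at hf hnear
  have hkN' : (0 : ℤ) < (k * N : ℕ) := by exact_mod_cast hkN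
  have hwindow : (k : ℤ) * (i * p) ≤ (k * N : ℕ) := by exact_mod_cast Nat.mul_le_mul_left k hipN
  have hVW' : ∀ n, c + N - i * p ≤ n → n < c + N + i * p → V n = W n := fun n hlow hhigh => by
    obtain ⟨q, rfl⟩ := hpN
    have hWn := hW.sub_nat_mul_eq q (x := n)
    rw [← Function.Periodic.sub_eq hV n, hVW _ (by linarith) (by linarith), ← hWn]
    push_cast
    rw [mul_comm]
  have hcN : (p : ℤ) ∣ c + N := dvd_add hpc (by exact_mod_cast hpN)
  have hleft : |f (k * c)| ≤ (2 / τ) ^ i * 4 :=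
    abs_le_of_le_abs_trace_monodromy hW hk hpc hVW hf4
      (fun n hlow hhigh => hf n (by linarith) (by linarith)) hτ hgap
  have hright : |f (k * (c + N))| ≤ (2 / τ) ^ i * 4 :=
    abs_le_of_le_abs_trace_monodromy hW hk hcN hVW' hf4
      (fun n hlow hhigh => hf n (by push_cast at *; linarith) (by push_cast at *; linarith)) hτ hgap
  rw [mul_add, ← Nat.cast_mul] at hright
  obtain ⟨x, hx, hxE⟩ := hnear E f _ hf1
    (fun n hlow hhigh => hf n (by linarith) (by linarith)) hleft hright hi
  exact ⟨x, hx, hxE.trans_eq (by ring)⟩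

theorem exists_finset_near_of_eq_on_block {V : ℤ →ᵇ ℝ} {N : ℕ} (hN : 0 < N)
    (hV : Function.Periodic V N) {W : ℤ → ℝ} {p : ℕ} (hW : Function.Periodic W p) {D : ℕ}
    (hD : 0 < D) (hpD : p ∣ D) {i : ℕ} (hDN : D * (2 * i + 1) ∣ N) {t : ℤ}
    (hVW : ∀ n, t * (D * (2 * i + 1) : ℕ) ≤ n → n < (t + 1) * (D * (2 * i + 1) : ℕ) → V n = W n)
    {k : ℕ} (hk : 0 < k) (lam : ℝ) {τ : ℝ} (hτ : 0 < τ) (hi : (2 / τ) ^ i * 4 ≤ 1 / 2) :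
    ∃ F : Finset ℝ, F.card ≤ k * N ∧ ∀ E ∈ SchrodingerSpectrum (scaledSieve lam k V),
      τ ≤ |(monodromy lam k E W p).trace| → ∃ x ∈ F, |x - E| ≤ 16 * (2 / τ) ^ i := by
  have hip : i * p ≤ i * D := Nat.mul_le_mul_left i (Nat.le_of_dvd hD hpD)
  have hpc : (p : ℤ) ∣ t * (D * (2 * i + 1) : ℕ) + D * i :=
    dvd_add (dvd_mul_of_dvd_right (by exact_mod_cast hpD.mul_right _) _)
      (dvd_mul_of_dvd_left (by exact_mod_cast hpD) _)
  refine exists_finset_near_of_eq_on_window hN hV hW ((hpD.mul_right _).trans hDN) hpc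
    ((?_ : i * p ≤ D * (2 * i + 1)).trans (Nat.le_of_dvd hN hDN))
    (fun n hlow hhigh => hVW n (by linarith) ?_) hk lam hτ hi
  · linarith [Nat.zero_le (i * D)]
  · push_cast at hhigh ⊢
    linarith

end Concatenation

section GapFamily

theorem continuous_cocycle {M Y : Type*} [Monoid M] [TopologicalSpace M] [ContinuousMul M]
    [TopologicalSpace Y] {g : Y → ℤ → M} (hg : ∀ n, Continuous fun y => g y n) (n : ℤ) (j : ℕ) :
    Continuous fun y => cocycle (g y) n j := by
  induction j with
  | zero => exact continuous_const
  | succ j ih => exact (hg _).mul ih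

theorem continuous_trace_monodromy (k : ℕ) (V : ℤ → ℝ) (q : ℕ) :
    Continuous fun y : ℝ × ℝ => (monodromy y.1 k y.2 V q).trace := by
  have hstep : ∀ v : ℝ × ℝ → ℝ, Continuous v → Continuous fun y => stepMatrix y.2 (v y) :=
    fun v hv => continuous_matrix fun a b => by
      fin_cases a <;> fin_cases b <;> dsimp [stepMatrix] <;> fun_prop
  refine (continuous_cocycle (fun n => ?_) 0 q).matrix_trace
  exact ((hstep _ continuous_const).pow _).mul (hstep _ (by fun_prop))

/-- The energies at which a transfer matrix of the free operator over `k - 1` sites has a vanishing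
corner entry. At these energies sieving may decouple the sites of `kℤ`, and gaps need not open. -/
def exceptionalEnergies (k : ℕ) : Finset ℝ :=
  (finite_stepMatrix_zero_pow_apply_eq_zero (k - 1)).toFinset

theorem exists_gap_family {V : ℤ → ℝ} {q : ℕ} (hq : 0 < q) (hV : Function.Periodic V q) (k : ℕ)
    {ε : ℝ} (hε : 0 < ε) {M : ℝ} (hM : 0 < M) (R : ℝ) {η : ℝ} (hη : 0 < η) :
    ∃ (s : Finset ((ℤ → ℝ) × ℕ)) (τ : ℝ), s.Nonempty ∧ 2 < τ ∧
      (∀ a ∈ s, 0 < a.2 ∧ Function.Periodic a.1 a.2 ∧ ∀ n, |a.1 n - V n| ≤ ε) ∧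
      ∀ lam E : ℝ, 1 / M ≤ |lam| → |lam| ≤ M → |E| ≤ R →
        (∀ z ∈ exceptionalEnergies k, η ≤ |z - E|) →
          ∃ a ∈ s, τ ≤ |(monodromy lam k E a.1 a.2).trace| := by
  let K : Set (ℝ × ℝ) := (Icc (-M) M ×ˢ Icc (-R) R) ∩
    ({y | 1 / M ≤ |y.1|} ∩ ⋂ z ∈ exceptionalEnergies k, {y | η ≤ |z - y.2|})
  have hK : IsCompact K := (isCompact_Icc.prod isCompact_Icc).inter_right <|
    (isClosed_le continuous_const (by fun_prop)).inter <|
      isClosed_biInter fun z _ => isClosed_le continuous_const (by fun_prop)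
  let α := {a : (ℤ → ℝ) × ℕ // 0 < a.2 ∧ Function.Periodic a.1 a.2 ∧ ∀ n, |a.1 n - V n| ≤ ε}
  have : Nonempty α := ⟨⟨(V, q), hq, hV, fun n => by rw [sub_self, abs_zero]; exact hε.le⟩⟩
  obtain ⟨s, τ, hs0, hτ, hs⟩ := exists_finset_le_of_isCompact hK (c := 2)
    (φ := fun (a : α) y => |(monodromy y.1 k y.2 a.1.1 a.1.2).trace|)
    (fun a => (continuous_trace_monodromy k _ _).abs) fun y ⟨_, hlam, hE⟩ => by
      have hne : (stepMatrix y.2 0 ^ (k - 1)) 0 0 ≠ 0 := fun h0 => by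
        have := mem_iInter₂.1 hE y.2 ((Set.Finite.mem_toFinset _).2 h0)
        rw [mem_ofPred_eq, sub_self, abs_zero] at this
        exact absurd this hη.not_ge
      obtain ⟨V', q', hq', hV', hclose, htrace⟩ := exists_periodic_two_lt_abs_trace_monodromy
        (abs_pos.1 ((one_div_pos.2 hM).trans_le hlam)) hne hq hV hε
      exact ⟨⟨(V', q'), hq', hV', hclose⟩, htrace⟩
  refine ⟨s.map (Function.Embedding.subtype _), τ, hs0.map, hτ, fun a ha => ?_,
    fun lam E h1 h2 hR hz => ?_⟩
  · obtain ⟨a, -, rfl⟩ := Finset.mem_map.1 ha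
    exact a.2
  · obtain ⟨a, ha, hτa⟩ := hs (lam, E) ⟨⟨abs_le.1 h2, abs_le.1 hR⟩, h1, mem_iInter₂.2 hz⟩
    exact ⟨a, Finset.mem_map_of_mem _ ha, hτa⟩

theorem exists_boundedContinuous_eq_of_abs_sub_le {V : ℤ →ᵇ ℝ} {U : ℤ → ℝ} {ε : ℝ}
    (hU : ∀ n, |U n - V n| ≤ ε) : ∃ U' : ℤ →ᵇ ℝ, ⇑U' = U ∧ dist U' V ≤ ε := by
  have hε : 0 ≤ ε := (abs_nonneg _).trans (hU 0)
  refine ⟨ofNormedAddCommGroupDiscrete U (ε + ‖V‖) fun n => ?_, rfl, (dist_le hε).2 hU⟩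
  calc ‖U n‖ = ‖U n - V n + V n‖ := by rw [sub_add_cancel]
    _ ≤ ε + ‖V‖ := norm_add_le_of_le (hU n) (V.norm_coe_le_norm n)

theorem exists_concatenation_of_gap_family {V : ℤ →ᵇ ℝ} {ε : ℝ} {s : Finset ((ℤ → ℝ) × ℕ)}
    (hs : s.Nonempty)
    (hsV : ∀ a ∈ s, 0 < a.2 ∧ Function.Periodic a.1 a.2 ∧ ∀ n, |a.1 n - V n| ≤ ε) {τ : ℝ}
    (hτ : 0 < τ) {k : ℕ} (hk : 0 < k) :
    ∃ A : ℕ, ∀ i : ℕ, (2 / τ) ^ i * 4 ≤ 1 / 2 → ∃ U : ℤ →ᵇ ℝ, IsPeriodicSeq U ∧ dist U V ≤ ε ∧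
      ∀ lam : ℝ, ∃ F : Finset ℝ, F.card ≤ A * (2 * i + 1) ∧
        ∀ E ∈ SchrodingerSpectrum (scaledSieve lam k U),
          (∃ a ∈ s, τ ≤ |(monodromy lam k E a.1 a.2).trace|) →
            ∃ x ∈ F, |x - E| ≤ 16 * (2 / τ) ^ i := by
  classical
  let D := ∏ a ∈ s, a.2
  have hD : 0 < D := Finset.prod_pos fun a ha => (hsV a ha).1
  have hdvd : ∀ a ∈ s, a.2 ∣ D := fun a ha => Finset.dvd_prod_of_mem _ ha
  refine ⟨s.card * (k * (s.card * D)), fun i hi => ?_⟩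
  let L := D * (2 * i + 1)
  have hL : 0 < L := by positivity
  have hN : 0 < s.card * L := Nat.mul_pos hs.card_pos hL
  have hperiodic : ∀ a ∈ s, Function.Periodic a.1 L := fun a ha => by
    obtain ⟨c, hc⟩ := (hdvd a ha).mul_right (2 * i + 1)
    rw [show L = a.2 * c from hc, Nat.cast_mul, mul_comm]
    exact (hsV a ha).2.1.nat_mul c
  obtain ⟨U, hUper, hUW, hblock⟩ :=
    exists_periodic_concatenation hs (W := Prod.fst) hL hperiodic
  obtain ⟨U, rfl, hdist⟩ := exists_boundedContinuous_eq_of_abs_sub_le (V := V) (U := U) (ε := ε)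
    fun n => by
      obtain ⟨a, ha, hn⟩ := hUW n
      rw [hn]
      exact (hsV a ha).2.2 n
  refine ⟨U, ⟨_, hN, hUper⟩, hdist, fun lam => ?_⟩
  have hF : ∀ a ∈ s, ∃ F : Finset ℝ, F.card ≤ k * (s.card * L) ∧
      ∀ E ∈ SchrodingerSpectrum (scaledSieve lam k U), τ ≤ |(monodromy lam k E a.1 a.2).trace| →
        ∃ x ∈ F, |x - E| ≤ 16 * (2 / τ) ^ i := fun a ha => by
    obtain ⟨t, ht⟩ := hblock a ha
    exact exists_finset_near_of_eq_on_block hN hUper (hsV a ha).2.1 hD (hdvd a ha)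
      (dvd_mul_left L s.card) ht hk lam hτ hi
  choose! F hFcard hFnear using hF
  refine ⟨s.biUnion F, ?_, fun E hE ⟨a, ha, hgap⟩ => ?_⟩
  · exact (Finset.card_biUnion_le_card_mul _ _ _ hFcard).trans_eq (by ring)
  · obtain ⟨x, hx, hxE⟩ := hFnear a ha E hE hgap
    exact ⟨x, Finset.mem_biUnion.2 ⟨a, ha, hx⟩, hxE⟩

end GapFamily

section SmallCover

theorem abs_le_of_mem_SchrodingerSpectrum_scaledSieve {V : ℤ →ᵇ ℝ} {lam : ℝ} {k : ℕ} {E : ℝ}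
    (hE : E ∈ SchrodingerSpectrum (scaledSieve lam k V)) : |E| ≤ 2 + |lam| * ‖V‖ := by
  have hnorm : ‖scaledSieve lam k V‖ ≤ |lam| * ‖V‖ := by
    have hzero : scaledSieve lam k 0 = 0 := by
      ext n
      simp [scaledSieve_apply, sieve]
    simpa [hzero] using dist_scaledSieve_le (k := k) lam V 0
  linarith [abs_le_of_mem_SchrodingerSpectrum hE]

theorem exists_periodic_spectrum_near_finset {V : ℤ →ᵇ ℝ} (hV : IsPeriodicSeq V) {ε : ℝ}
    (hε : 0 < ε) {M : ℝ} (hM : 0 < M) {η : ℝ} (hη : 0 < η) {k : ℕ} (hk : 0 < k) :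
    ∃ (ρ : ℝ) (A : ℕ), 0 < ρ ∧ ρ < 1 ∧ ∀ i : ℕ, ρ ^ i * 4 ≤ 1 / 2 →
      ∃ U : ℤ →ᵇ ℝ, IsPeriodicSeq U ∧ dist U V ≤ ε ∧ ∀ lam : ℝ, 1 / M ≤ |lam| → |lam| ≤ M →
        ∃ F : Finset ℝ, F.card ≤ A * (2 * i + 1) ∧
          ∀ E ∈ SchrodingerSpectrum (scaledSieve lam k U),
            (∃ z ∈ exceptionalEnergies k, |z - E| < η) ∨ ∃ x ∈ F, |x - E| ≤ 16 * ρ ^ i := by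
  obtain ⟨q, hq, hVq⟩ := hV
  obtain ⟨s, τ, hs, hτ, hsV, hgap⟩ := exists_gap_family hq hVq k hε hM (2 + M * (ε + ‖V‖)) hη
  have hτ0 : 0 < τ := two_pos.trans hτ
  obtain ⟨A, hA⟩ := exists_concatenation_of_gap_family hs hsV hτ0 hk
  refine ⟨2 / τ, A, by positivity, (div_lt_one hτ0).2 hτ, fun i hi => ?_⟩
  obtain ⟨U, hU, hUV, hF⟩ := hA i hi
  refine ⟨U, hU, hUV, fun lam hlam hlamM => ?_⟩
  obtain ⟨F, hcard, hnear⟩ := hF lam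
  refine ⟨F, hcard, fun E hE => or_iff_not_imp_left.2 fun hz => ?_⟩
  push Not at hz
  have hUnorm : ‖U‖ ≤ ε + ‖V‖ := by
    have := norm_le_norm_add_norm_sub' U V
    rw [← dist_eq_norm] at this
    linarith
  have hER : |E| ≤ 2 + M * (ε + ‖V‖) :=
    (abs_le_of_mem_SchrodingerSpectrum_scaledSieve hE).trans (by gcongr)
  exact hnear E hE (hgap lam E hlam hlamM hER hz)

/-- `s` is covered by finitely many intervals whose lengths to the power `d` add up to at most
`ε`. -/
def HasSmallCover (d ε : ℝ) (s : Set ℝ) : Prop :=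
  ∃ (ι : Type) (_ : Fintype ι) (x r : ι → ℝ), (∀ i, 0 ≤ r i) ∧
    s ⊆ ⋃ i, Metric.closedBall (x i) (r i) ∧ ∑ i, (2 * r i) ^ d ≤ ε

theorem HasSmallCover.mono {d ε : ℝ} {s t : Set ℝ} (ht : HasSmallCover d ε t) (hst : s ⊆ t) :
    HasSmallCover d ε s :=
  let ⟨ι, hι, x, r, hr, hcover, hsum⟩ := ht
  ⟨ι, hι, x, r, hr, hst.trans hcover, hsum⟩

theorem HasSmallCover.union {d ε ε' : ℝ} {s s' : Set ℝ} (h : HasSmallCover d ε s)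
    (h' : HasSmallCover d ε' s') : HasSmallCover d (ε + ε') (s ∪ s') := by
  obtain ⟨ι, _, x, r, hr, hcover, hsum⟩ := h
  obtain ⟨ι', _, x', r', hr', hcover', hsum'⟩ := h'
  refine ⟨ι ⊕ ι', inferInstance, Sum.elim x x', Sum.elim r r', ?_, ?_, ?_⟩
  · rintro (i | i)
    exacts [hr i, hr' i]
  · rw [iUnion_sum]
    exact union_subset_union hcover hcover'
  · rw [Fintype.sum_sum_type]
    exact add_le_add hsum hsum'

theorem hasSmallCover_of_card_mul_le {d ε r : ℝ} (hr : 0 ≤ r) {F : Finset ℝ}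
    (hF : F.card * (2 * r) ^ d ≤ ε) : HasSmallCover d ε {E | ∃ x ∈ F, |x - E| ≤ r} := by
  refine ⟨F, inferInstance, Subtype.val, fun _ => r, fun _ => hr, fun E ⟨x, hx, hxE⟩ => ?_, ?_⟩
  · refine mem_iUnion.2 ⟨⟨x, hx⟩, ?_⟩
    rwa [Metric.mem_closedBall', Real.dist_eq]
  · simpa using hF

theorem dimH_le_of_hasSmallCover {d : ℝ} (hd : 0 < d) {s : Set ℝ}
    (h : ∀ n : ℕ, HasSmallCover d (1 / ((n : ℝ) + 1)) s) : dimH s ≤ ENNReal.ofReal d := by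
  choose ι hι x r hr hcover hsum using h
  have hpow : ∀ n i, 0 ≤ (2 * r n i) ^ d := fun n i => Real.rpow_nonneg (by linarith [hr n i]) d
  have hediam : ∀ n i, Metric.ediam (Metric.closedBall (x n i) (r n i))
      = ENNReal.ofReal (2 * r n i) := fun n i => by
    rw [Real.closedBall_eq_Icc, Real.ediam_Icc]
    congr 1
    ring
  have hle : ∀ n i, 2 * r n i ≤ (1 / ((n : ℝ) + 1)) ^ d⁻¹ := fun n i =>
    (Real.le_rpow_inv_iff_of_pos (by linarith [hr n i]) (by positivity) hd).2 <|
      (Finset.single_le_sum (fun j _ => hpow n j) (Finset.mem_univ i)).trans (hsum n)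
  have hzero : Filter.Tendsto (fun n : ℕ => ENNReal.ofReal ((1 / ((n : ℝ) + 1)) ^ d⁻¹))
      Filter.atTop (nhds 0) := by
    have := (tendsto_one_div_add_atTop_nhds_zero_nat (𝕜 := ℝ)).rpow_const
      (p := d⁻¹) (Or.inr (by positivity))
    rw [Real.zero_rpow (inv_ne_zero hd.ne')] at this
    simpa using ENNReal.tendsto_ofReal this
  have hmeasure : Measure.hausdorffMeasure d s ≤ 1 := by
    refine (Measure.hausdorffMeasure_le_liminf_sum d s _ hzero
      (fun n i => Metric.closedBall (x n i) (r n i))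
      (Filter.Eventually.of_forall fun n i => ?_) (Filter.Eventually.of_forall hcover)).trans ?_
    · exact (hediam n i).trans_le (ENNReal.ofReal_le_ofReal (hle n i))
    · refine (Filter.liminf_le_liminf (Filter.Eventually.of_forall fun n => ?_)).trans
        (Filter.liminf_const (1 : ENNReal)).le
      calc ∑ i, Metric.ediam (Metric.closedBall (x n i) (r n i)) ^ d
          = ∑ i, ENNReal.ofReal ((2 * r n i) ^ d) := Finset.sum_congr rfl fun i _ => by
            rw [hediam, ENNReal.ofReal_rpow_of_nonneg (by linarith [hr n i]) hd.le]
        _ = ENNReal.ofReal (∑ i, (2 * r n i) ^ d) :=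
            (ENNReal.ofReal_sum_of_nonneg fun i _ => hpow n i).symm
        _ ≤ 1 := ENNReal.ofReal_le_one.2 ((hsum n).trans (by
            rw [div_le_one (by positivity)]
            linarith [(n.cast_nonneg : (0 : ℝ) ≤ n)]))
  have := dimH_le_of_hausdorffMeasure_ne_top (d := d.toNNReal) (s := s)
    (by rw [Real.coe_toNNReal d hd.le]; exact ne_top_of_le_ne_top ENNReal.one_ne_top hmeasure)
  exact this

theorem exists_pos_mul_rpow_le (A : ℝ) {d ε : ℝ} (hd : 0 < d) (hε : 0 < ε) :
    ∃ η, 0 < η ∧ A * (2 * (2 * η)) ^ d ≤ ε := by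
  have hcont : Continuous fun η : ℝ => A * (2 * (2 * η)) ^ d :=
    continuous_const.mul (Continuous.rpow_const (by fun_prop) fun _ => Or.inr hd.le)
  have hlim := hcont.tendsto 0
  rw [mul_zero, mul_zero, Real.zero_rpow hd.ne', mul_zero] at hlim
  obtain ⟨η, hle, hη⟩ := (((hlim.mono_left nhdsWithin_le_nhds).eventually (ge_mem_nhds hε)).and
    (self_mem_nhdsWithin (s := Ioi 0))).exists
  exact ⟨η, hη, hle⟩

theorem eventually_mul_rpow_pow_le (A c : ℝ) {d ε ρ : ℝ} (hc : 0 ≤ c) (hd : 0 < d) (hε : 0 < ε)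
    (hρ0 : 0 < ρ) (hρ1 : ρ < 1) :
    ∀ᶠ i : ℕ in Filter.atTop, A * (2 * i + 1) * (c * ρ ^ i) ^ d ≤ ε := by
  have hs0 : 0 ≤ ρ ^ d := by positivity
  have hs1 : ρ ^ d < 1 := Real.rpow_lt_one hρ0.le hρ1 hd
  have hlim := ((((tendsto_self_mul_const_pow_of_lt_one hs0 hs1).const_mul 2).add
    (tendsto_pow_atTop_nhds_zero_of_lt_one hs0 hs1)).const_mul (A * c ^ d)).eventually_le_const
      (u := ε) (by simpa using hε)
  filter_upwards [hlim] with i hi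
  refine le_of_eq_of_le ?_ hi
  rw [Real.mul_rpow hc (by positivity), ← Real.rpow_natCast_mul hρ0.le,
    ← Real.rpow_mul_natCast hρ0.le, mul_comm (i : ℝ) d]
  ring

/-- The bounded potentials `V` for which, uniformly over couplings `1 / M ≤ |lam| ≤ M`, the spectrum
of the Schrödinger operator with potential `lam * sieve V k` has a cover of `d`-size at most `ε`. -/
def thinSpectrumSet (d ε M : ℝ) (k : ℕ) : Set (ℤ →ᵇ ℝ) :=
  {V | ∀ lam : ℝ, 1 / M ≤ |lam| → |lam| ≤ M →
    HasSmallCover d ε (SchrodingerSpectrum (scaledSieve lam k V))}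

theorem hasSmallCover_SchrodingerSpectrum_of_dist_le {d ε ε' η r : ℝ} {Z F : Finset ℝ}
    {W W' : ℤ →ᵇ ℝ} (hdist : dist W W' ≤ min η r) (hZ : Z.card * (2 * (2 * η)) ^ d ≤ ε)
    (hF : F.card * (2 * (17 * r)) ^ d ≤ ε')
    (hnear : ∀ E ∈ SchrodingerSpectrum W,
      (∃ z ∈ Z, |z - E| < η) ∨ ∃ x ∈ F, |x - E| ≤ 16 * r) :
    HasSmallCover d (ε + ε') (SchrodingerSpectrum W') := by
  obtain ⟨hη, hr⟩ := le_min_iff.1 hdist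
  have hη0 : 0 ≤ η := dist_nonneg.trans hη
  have hr0 : 0 ≤ r := dist_nonneg.trans hr
  refine ((hasSmallCover_of_card_mul_le (by positivity) hZ).union
    (hasSmallCover_of_card_mul_le (by positivity) hF)).mono fun E hE => ?_
  obtain ⟨E', hE', hEE'⟩ := exists_mem_SchrodingerSpectrum_abs_sub_le_dist W W' hE
  refine (hnear E' hE').imp ?_ ?_
  · rintro ⟨z, hz, hzE⟩
    exact ⟨z, hz, (abs_sub_le z E' E).trans (by linarith)⟩
  · rintro ⟨x, hx, hxE⟩
    exact ⟨x, hx, (abs_sub_le x E' E).trans (by linarith)⟩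

theorem exists_periodic_mem_interior_thinSpectrumSet {V : ℤ →ᵇ ℝ} (hV : IsPeriodicSeq V)
    {δ d ε M : ℝ} (hδ : 0 < δ) (hd : 0 < d) (hε : 0 < ε) (hM : 0 < M) {k : ℕ} (hk : 0 < k) :
    ∃ U : ℤ →ᵇ ℝ, IsPeriodicSeq U ∧ dist U V ≤ δ ∧ U ∈ interior (thinSpectrumSet d ε M k) := by
  set Z := exceptionalEnergies k
  obtain ⟨η, hη, hZ⟩ := exists_pos_mul_rpow_le Z.card hd (half_pos hε)
  obtain ⟨ρ, A, hρ0, hρ1, hconcat⟩ := exists_periodic_spectrum_near_finset hV hδ hM hη hk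
  have hsmall : ∀ᶠ i : ℕ in Filter.atTop, ρ ^ i * 4 ≤ 1 / 2 :=
    ((tendsto_pow_atTop_nhds_zero_of_lt_one hρ0.le hρ1).mul_const 4).eventually_le_const
      (by norm_num)
  obtain ⟨i, hi, hcover⟩ := (hsmall.and (eventually_mul_rpow_pow_le A (2 * 17) (by norm_num) hd
    (half_pos hε) hρ0 hρ1)).exists
  obtain ⟨U, hU, hUV, hnear⟩ := hconcat i hi
  have hβ : 0 < min η (ρ ^ i) / M := div_pos (lt_min hη (pow_pos hρ0 i)) hM
  refine ⟨U, hU, hUV, mem_interior_iff_mem_nhds.2 (Filter.mem_of_superset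
    (Metric.closedBall_mem_nhds U hβ) fun V' hV' lam hlam hlamM => ?_)⟩
  obtain ⟨F, hF, hFE⟩ := hnear lam hlam hlamM
  have hF' : F.card * (2 * (17 * ρ ^ i)) ^ d ≤ ε / 2 := by
    refine le_trans ?_ hcover
    rw [← mul_assoc 2]
    gcongr
    exact_mod_cast hF
  rw [← add_halves ε]
  refine hasSmallCover_SchrodingerSpectrum_of_dist_le ?_ hZ hF' hFE
  calc dist (scaledSieve lam k U) (scaledSieve lam k V') ≤ |lam| * dist U V' :=
        dist_scaledSieve_le lam k U V'
    _ ≤ M * (min η (ρ ^ i) / M) := by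
      gcongr
      exact Metric.mem_closedBall'.1 hV'
    _ = min η (ρ ^ i) := by field_simp

theorem dense_preimage_interior_thinSpectrumSet {d ε M : ℝ} (hd : 0 < d) (hε : 0 < ε) (hM : 0 < M)
    {k : ℕ} (hk : 0 < k) :
    Dense ((↑) ⁻¹' interior (thinSpectrumSet d ε M k) : Set LPZ) := by
  refine Metric.dense_iff.2 fun V δ hδ => ?_
  obtain ⟨P, hP, hVP⟩ := Metric.mem_closure_iff.1 V.2 (δ / 2) (half_pos hδ)
  obtain ⟨U, hU, hUP, hmem⟩ :=
    exists_periodic_mem_interior_thinSpectrumSet hP (by positivity : 0 < δ / 4) hd hε hM hk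
  refine ⟨⟨U, subset_closure hU⟩, ?_, hmem⟩
  rw [Metric.mem_ball, Subtype.dist_eq]
  linarith [dist_triangle_right U V.1 P]

theorem dimH_eq_zero_of_mem_thinSpectrumSet {V : ℤ →ᵇ ℝ} {k : ℕ}
    (hV : ∀ a b c : ℕ, V ∈ thinSpectrumSet (1 / ((a : ℝ) + 1)) (1 / ((b : ℝ) + 1)) (c + 1) k)
    {lam : ℝ} (hlam : lam ≠ 0) : dimH (SchrodingerSpectrum (scaledSieve lam k V)) = 0 := by
  have hlam' : 0 < |lam| := abs_pos.2 hlam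
  obtain ⟨c, hc⟩ := exists_nat_ge (max |lam| (1 / |lam|))
  obtain ⟨hc1, hc2⟩ := max_le_iff.1 hc
  have hlamc : 1 / ((c : ℝ) + 1) ≤ |lam| := (one_div_le (by positivity) hlam').2 (by linarith)
  have hdim : ∀ a : ℕ, dimH (SchrodingerSpectrum (scaledSieve lam k V))
      ≤ ENNReal.ofReal (1 / ((a : ℝ) + 1)) := fun a =>
    dimH_le_of_hasSmallCover (by positivity) fun b => hV a b c lam hlamc (by linarith)
  have hlim := ENNReal.tendsto_ofReal (tendsto_one_div_add_atTop_nhds_zero_nat (𝕜 := ℝ))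
  rw [ENNReal.ofReal_zero] at hlim
  exact le_antisymm (ge_of_tendsto' hlim hdim) bot_le

theorem interior_eq_empty_of_dimH_eq_zero {s : Set ℝ} (hs : dimH s = 0) : interior s = ∅ :=
  not_nonempty_iff_eq_empty.1 fun h => by
    simp [Real.dimH_of_nonempty_interior h] at hs

end SmallCover

/-- For generic limit-periodic `V : ℤ → ℝ`, the spectrum of `H_{λ V^{[k]}}` is a
Cantor set of zero Hausdorff dimension for every `λ ≠ 0` and every `k ∈ ℕ`. -/
theorem sieve_generic_zero_dim_cantor :
    ∃ R : Set LPZ, IsGδ R ∧ Dense R ∧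
      ∀ V ∈ R, ∀ lam : ℝ, lam ≠ 0 → ∀ k : ℕ, 0 < k →
        IsZeroDimCantor
          (SchrodingerSpectrum (fun n => lam * sieve (⇑(V : ℤ →ᵇ ℝ)) k n)) := by
  have : CompleteSpace LPZ := isClosed_closure.completeSpace_coe
  let G : ℕ × ℕ × ℕ × ℕ → Set LPZ := fun ⟨a, b, c, j⟩ =>
    (↑) ⁻¹' interior (thinSpectrumSet (1 / ((a : ℝ) + 1)) (1 / ((b : ℝ) + 1)) (c + 1) (j + 1))
  have hopen : ∀ x, IsOpen (G x) := fun _ => isOpen_interior.preimage continuous_subtype_val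
  have hdense : ∀ x, Dense (G x) := fun _ => dense_preimage_interior_thinSpectrumSet
    (by positivity) (by positivity) (by positivity) (Nat.succ_pos _)
  refine ⟨⋂ x, G x, .iInter_of_isOpen hopen, dense_iInter_of_isOpen hopen hdense,
    fun V hV lam hlam k hk => ?_⟩
  obtain ⟨j, rfl⟩ := Nat.exists_eq_add_one.2 hk
  have hdim : dimH (SchrodingerSpectrum (scaledSieve lam (j + 1) V)) = 0 :=
    dimH_eq_zero_of_mem_thinSpectrumSet
      (fun a b c => interior_subset (mem_iInter.1 hV (a, b, c, j))) hlam
  change IsZeroDimCantor (SchrodingerSpectrum (scaledSieve lam (j + 1) V))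
  exact ⟨SchrodingerSpectrum_nonempty _, isCompact_SchrodingerSpectrum _,
    preperfect_SchrodingerSpectrum_of_mem_LPZ (scaledSieve_mem_LPZ V.2 hk lam),
    interior_eq_empty_of_dimH_eq_zero hdim, hdim⟩
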